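/- For every positive integer k there exists a positive integer p = p(k) such that every 2-connected graph of path-width at least p has a minor isomorphic to 𝒫_k or a minor isomorphic to 𝒬_k. -/

import Mathlib

/-!
Common definitions: minors, widths, connectivity, the specific graphs
`K4`, `K23`, `C32`, `graphA`, the binary trees `CT_h`, the graphs `𝒫_k`, `𝒬_k`,
the trees `T_h`, homeomorphic embeddings, cascades, and related notions,
following Dang--Thomas, "Minors of two-connected graphs of large path-width".
-/

open SimpleGraph

/-- A minor model of `H` in `G`: branch sets `f w` are nonempty, connected,
pairwise disjoint, and edges of `H` are realized by edges of `G` between branch sets. -/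
def IsMinorModel {W V : Type*} (H : SimpleGraph W) (G : SimpleGraph V) (f : W → Set V) : Prop :=
  (∀ w, (f w).Nonempty) ∧
  (∀ w, (G.induce (f w)).Connected) ∧
  (∀ w₁ w₂ : W, w₁ ≠ w₂ → Disjoint (f w₁) (f w₂)) ∧
  (∀ w₁ w₂ : W, H.Adj w₁ w₂ → ∃ v₁ ∈ f w₁, ∃ v₂ ∈ f w₂, G.Adj v₁ v₂)

/-- `H` is (isomorphic to) a minor of `G`. -/
def IsMinor {W V : Type*} (H : SimpleGraph W) (G : SimpleGraph V) : Prop :=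
  ∃ f : W → Set V, IsMinorModel H G f

/-- The complete graph on four vertices. -/
def K4 : SimpleGraph (Fin 4) := ⊤

/-- The complete bipartite graph `K_{2,3}`. -/
def K23 : SimpleGraph (Fin 2 ⊕ Fin 3) := completeBipartiteGraph (Fin 2) (Fin 3)

/-- The graph `A`: a cycle `a₁a₂a₃a₄a₅a₆a₁` plus the edges `a₁a₃`, `a₃a₅`, `a₅a₁`. -/
def graphA : SimpleGraph (Fin 6) :=
  SimpleGraph.fromEdgeSet
    {s(0, 1), s(1, 2), s(2, 3), s(3, 4), s(4, 5), s(5, 0), s(0, 2), s(2, 4), s(4, 0)}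

/-- The graph `C_{3,2}`: two disjoint triangles. -/
def C32 : SimpleGraph (Fin 2 × Fin 3) :=
  SimpleGraph.fromRel (fun u v => u.1 = v.1)

/-- A graph is outerplanar iff it has no `K₄` minor and no `K_{2,3}` minor
(the classical characterization of outerplanarity). -/
def Outerplanar {V : Type*} (G : SimpleGraph V) : Prop :=
  ¬ IsMinor K4 G ∧ ¬ IsMinor K23 G

/-- `G` is `k`-connected: it has more than `k` vertices and deleting fewer than `k`
vertices leaves a connected graph. -/
def IsKConnected {V : Type*} [Fintype V] (k : ℕ) (G : SimpleGraph V) : Prop :=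
  k + 1 ≤ Fintype.card V ∧
  ∀ S : Finset V, S.card < k → (G.induce ((↑S : Set V)ᶜ)).Connected

/-- `(Tr, X)` is a tree-decomposition of `G`: `Tr` is a tree, the bags `X t` cover all
vertices and edges (W1), and whenever `t₂` lies on the path of `Tr` between `t₁` and `t₃`
we have `X t₁ ∩ X t₃ ⊆ X t₂` (W2). -/
def IsTreeDecomp {V T : Type*} (G : SimpleGraph V) (Tr : SimpleGraph T) (X : T → Finset V) :
    Prop :=
  Tr.IsTree ∧
  (∀ v : V, ∃ t, v ∈ X t) ∧
  (∀ u v : V, G.Adj u v → ∃ t, u ∈ X t ∧ v ∈ X t) ∧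
  (∀ (t₁ t₂ t₃ : T) (p : Tr.Walk t₁ t₃), p.IsPath → t₂ ∈ p.support →
    ∀ v : V, v ∈ X t₁ → v ∈ X t₃ → v ∈ X t₂)

/-- A path-decomposition of `G`, with bags indexed by `Fin n`. -/
def IsPathDecomp {V : Type*} (G : SimpleGraph V) {n : ℕ} (X : Fin n → Finset V) : Prop :=
  (∀ v : V, ∃ i, v ∈ X i) ∧
  (∀ u v : V, G.Adj u v → ∃ i, u ∈ X i ∧ v ∈ X i) ∧
  (∀ i j k : Fin n, i ≤ j → j ≤ k → ∀ v : V, v ∈ X i → v ∈ X k → v ∈ X j)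

/-- The path-width of a finite graph: the least `w` such that `G` has a
path-decomposition all of whose bags have at most `w + 1` vertices. -/
noncomputable def pathwidth {V : Type*} [Fintype V] (G : SimpleGraph V) : ℕ :=
  sInf {w | ∃ (n : ℕ) (X : Fin n → Finset V), IsPathDecomp G X ∧ ∀ i, (X i).card ≤ w + 1}

/-- The tree-width of a finite graph: the least `w` such that `G` has a
tree-decomposition all of whose bags have at most `w + 1` vertices. -/
noncomputable def treewidth {V : Type*} [Fintype V] (G : SimpleGraph V) : ℕ :=
  sInf {w | ∃ (T : Type) (_ : Fintype T) (Tr : SimpleGraph T) (X : T → Finset V),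
    IsTreeDecomp G Tr X ∧ ∀ t, (X t).card ≤ w + 1}

/-- Vertices of the binary tree `CT_h`: paths from the root, recorded as reversed
lists of left/right moves, of length at most `h`. -/
abbrev CTVert (h : ℕ) := {l : List Bool // l.length ≤ h}

/-- The binary tree `CT_h` of height `h`. -/
def CTgraph (h : ℕ) : SimpleGraph (CTVert h) :=
  SimpleGraph.fromEdgeSet
    {e | ∃ (b : Bool) (σ : List Bool) (hσ : σ.length < h),
      e = s((⟨σ, le_of_lt hσ⟩ : CTVert h), (⟨b :: σ, by simpa using hσ⟩ : CTVert h))}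

/-- The graph `𝒫_k`: the binary tree `CT_k` together with one extra vertex (`none`)
adjacent to every leaf of `CT_k`. -/
def Pgraph (k : ℕ) : SimpleGraph (Option (CTVert k)) :=
  SimpleGraph.fromEdgeSet
    ({e | ∃ (b : Bool) (σ : List Bool) (hσ : σ.length < k),
        e = s(some (⟨σ, le_of_lt hσ⟩ : CTVert k), some (⟨b :: σ, by simpa using hσ⟩ : CTVert k))} ∪
     {e | ∃ l : CTVert k, l.1.length = k ∧ e = s(none, some l)})

/-- Vertices of `𝒬_k`: the two base vertices of the root triangle (`Sum.inl false` and
`Sum.inl true`), together with one apex vertex for each node of the complete binary tree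
of depth `< k` (recorded as a reversed list of moves). -/
abbrev QVert (k : ℕ) := Bool ⊕ {l : List Bool // l.length < k}

/-- The two ends of the base edge of the copy of the triangle at node `σ` of `𝒬_k`. -/
def qbase (k : ℕ) : List Bool → QVert k × QVert k
  | [] => (Sum.inl false, Sum.inl true)
  | b :: σ =>
      ((if b then (qbase k σ).2 else (qbase k σ).1),
        if h : σ.length < k then Sum.inr ⟨σ, h⟩ else Sum.inl false)

/-- The graph `𝒬_k`, built from triangles as in the recursive definition: the triangle at
node `σ` consists of the base edge `qbase k σ` together with the apex vertex `Sum.inr σ`;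
the base edge of `𝒬_k` is `s(Sum.inl false, Sum.inl true)`. -/
def Qgraph (k : ℕ) : SimpleGraph (QVert k) :=
  SimpleGraph.fromEdgeSet
    ({s(Sum.inl false, Sum.inl true)} ∪
     {e | ∃ (σ : List Bool) (h : σ.length < k),
        e = s(Sum.inr ⟨σ, h⟩, (qbase k σ).1) ∨ e = s(Sum.inr ⟨σ, h⟩, (qbase k σ).2)})

/-- The minor vertices of the tree `T_h` (one for each string of length `≤ h`). -/
abbrev MVert (h : ℕ) := {l : List Bool // l.length ≤ h}

/-- The major vertices of the tree `T_h` (one for each string of length `≤ h - 1`). -/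
abbrev JVert (h : ℕ) := {l : List Bool // l.length + 1 ≤ h}

/-- Vertices of the tree `T_h` (obtained from `CT_h` by subdividing every edge not incident
with a degree-one vertex and adding the minor root). -/
abbrev TVert (h : ℕ) := MVert h ⊕ JVert h

/-- The tree `T_h`: each major vertex `σ` is adjacent to the minor vertices `σ` (its parent),
`false :: σ` (its left neighbor) and `true :: σ` (its right neighbor). -/
def Tgraph (h : ℕ) : SimpleGraph (TVert h) :=
  SimpleGraph.fromEdgeSet
    {e | ∃ (σ : List Bool) (hσ : σ.length + 1 ≤ h),
      e = s(Sum.inr ⟨σ, hσ⟩, Sum.inl ⟨σ, Nat.le_of_succ_le hσ⟩) ∨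
      ∃ b : Bool, e = s(Sum.inr ⟨σ, hσ⟩, Sum.inl ⟨b :: σ, by simpa using hσ⟩)}

/-- A homeomorphic embedding of `TA` into `TB`: an injection such that for any two edges of
`TA` sharing an end `t`, the corresponding paths of `TB` are edge-disjoint. -/
def IsHomeoEmb {A B : Type*} (TA : SimpleGraph A) (TB : SimpleGraph B) (η : A → B) : Prop :=
  Function.Injective η ∧
  ∀ ⦃t t₁ t₂ : A⦄, TA.Adj t t₁ → TA.Adj t t₂ → t₁ ≠ t₂ →
    ∀ (p₁ : TB.Walk (η t) (η t₁)) (p₂ : TB.Walk (η t) (η t₂)),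
      p₁.IsPath → p₂.IsPath → ∀ e ∈ p₁.edges, e ∉ p₂.edges

/-- `v` lies in the span of `η`: it lies on a path of `TB` between two vertices in the
image of `η`. -/
def inSpan {A B : Type*} (TB : SimpleGraph B) (η : A → B) (v : B) : Prop :=
  ∃ (a₁ a₂ : A) (p : TB.Walk (η a₁) (η a₂)), p.IsPath ∧ v ∈ p.support

/-- A cascade of height `h` and size `s` in the tree-decomposition `(Tr, X)`:
a homeomorphic embedding of `T_h` with `|X (η t)| = s` for every minor vertex `t`
and `|X t| ≥ s` for every `t` in the span. -/
def IsCascade {V T : Type*} (Tr : SimpleGraph T) (X : T → Finset V) (h s : ℕ)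
    (η : TVert h → T) : Prop :=
  IsHomeoEmb (Tgraph h) Tr η ∧
  (∀ l : MVert h, (X (η (Sum.inl l))).card = s) ∧
  (∀ t : T, inSpan Tr η t → s ≤ (X t).card)

/-- An injective cascade with common intersection set `I`. -/
def IsInjectiveCascade {V T : Type*} (Tr : SimpleGraph T) (X : T → Finset V) (h s : ℕ)
    (η : TVert h → T) (I : Finset V) : Prop :=
  IsCascade Tr X h s η ∧ I.card < s ∧
  ∀ t t' : TVert h, t ≠ t' → ((X (η t) : Set V) ∩ (X (η t') : Set V)) = (I : Set V)

/-- A family of `s` disjoint paths in `G \ I` (a linkage). -/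
def IsLinkage {V : Type*} (G : SimpleGraph V) (I : Finset V) {s : ℕ} {x y : Fin s → V}
    (P : ∀ i : Fin s, G.Walk (x i) (y i)) : Prop :=
  (∀ i, (P i).IsPath) ∧
  (∀ i, ∀ v ∈ (P i).support, v ∉ I) ∧
  (∀ i j, i ≠ j → ∀ v ∈ (P i).support, v ∉ (P j).support)

/-- An ordered cascade: an injective cascade of size `s + |I|` with common intersection set
`I`, together with orderings `ξ t : Fin s → X (η t) \ I` of the bags at minor vertices, such
that at every major vertex there are left and right linkages connecting corresponding
vertices. -/
def IsOrderedCascade {V T : Type*} (G : SimpleGraph V) (Tr : SimpleGraph T)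
    (X : T → Finset V) (h s : ℕ) (η : TVert h → T) (I : Finset V)
    (ξ : MVert h → Fin s → V) : Prop :=
  IsInjectiveCascade Tr X h (s + I.card) η I ∧
  (∀ t : MVert h, Function.Injective (ξ t) ∧
    Set.range (ξ t) = (X (η (Sum.inl t)) : Set V) \ (I : Set V)) ∧
  ∀ (σ : List Bool) (hσ : σ.length + 1 ≤ h),
    (∃ P : ∀ i : Fin s,
        G.Walk (ξ ⟨σ, Nat.le_of_succ_le hσ⟩ i) (ξ ⟨false :: σ, by simpa using hσ⟩ i),
      IsLinkage G I P) ∧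
    (∃ Q : ∀ i : Fin s,
        G.Walk (ξ ⟨σ, Nat.le_of_succ_le hσ⟩ i) (ξ ⟨true :: σ, by simpa using hσ⟩ i),
      IsLinkage G I Q)

/-- The vertex set of the `η`-torso at the major vertex `σ` of `T_h`: the union of the bags
`X t - I` over all `t` such that the path in `Tr` from `t` to `η σ` contains none of the
images of the three minor neighbors of `σ` as an internal vertex. -/
def torsoSet {V T : Type*} (Tr : SimpleGraph T) (X : T → Finset V) {h : ℕ}
    (η : TVert h → T) (I : Finset V) (σ : List Bool) (hσ : σ.length + 1 ≤ h) : Set V :=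
  {v | v ∉ I ∧ ∃ t : T,
    (∀ p : Tr.Walk t (η (Sum.inr ⟨σ, hσ⟩)), p.IsPath →
      ∀ u : T,
        (u = η (Sum.inl ⟨σ, Nat.le_of_succ_le hσ⟩) ∨
         u = η (Sum.inl ⟨false :: σ, by simpa using hσ⟩) ∨
         u = η (Sum.inl ⟨true :: σ, by simpa using hσ⟩)) →
        u ∈ p.support → u = t ∨ u = η (Sum.inr ⟨σ, hσ⟩)) ∧
    v ∈ X t}

/-- `H` is a tripod in `G` with all vertices in `S`, center `c` and feet `f₁, f₂, f₃`:
the union of three paths from `c` to the feet, pairwise disjoint except for `c`,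
at least two of which have length at least one. -/
def IsTripodOn {V : Type*} (G : SimpleGraph V) (S : Set V) (H : G.Subgraph)
    (c f₁ f₂ f₃ : V) : Prop :=
  ∃ (W₁ : G.Walk c f₁) (W₂ : G.Walk c f₂) (W₃ : G.Walk c f₃),
    W₁.IsPath ∧ W₂.IsPath ∧ W₃.IsPath ∧
    (∀ v ∈ W₁.support, v ∈ S) ∧ (∀ v ∈ W₂.support, v ∈ S) ∧ (∀ v ∈ W₃.support, v ∈ S) ∧
    (∀ v, v ∈ W₁.support → v ∈ W₂.support → v = c) ∧
    (∀ v, v ∈ W₁.support → v ∈ W₃.support → v = c) ∧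
    (∀ v, v ∈ W₂.support → v ∈ W₃.support → v = c) ∧
    ((1 ≤ W₁.length ∧ 1 ≤ W₂.length) ∨ (1 ≤ W₁.length ∧ 1 ≤ W₃.length) ∨
      (1 ≤ W₂.length ∧ 1 ≤ W₃.length)) ∧
    H = W₁.toSubgraph ⊔ W₂.toSubgraph ⊔ W₃.toSubgraph

/-- The major vertex `σ` has property `A_{ij}` in the ordered cascade `η` with orderings
`ξ`: there are two disjoint tripods in the `η`-torso at `σ`, with feet as prescribed. -/
def HasPropA {V T : Type*} (G : SimpleGraph V) (Tr : SimpleGraph T) (X : T → Finset V)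
    {h s : ℕ} (η : TVert h → T) (I : Finset V) (ξ : MVert h → Fin s → V)
    (σ : List Bool) (hσ : σ.length + 1 ≤ h) (i j : Fin s) : Prop :=
  ∃ (Li Lj : G.Subgraph) (ci cj : V),
    (∃ m₂ m₃ : Fin s, (m₂ = i ∨ m₂ = j) ∧ (m₃ = i ∨ m₃ = j) ∧
      IsTripodOn G (torsoSet Tr X η I σ hσ) Li ci
        (ξ ⟨σ, Nat.le_of_succ_le hσ⟩ i)
        (ξ ⟨false :: σ, by simpa using hσ⟩ m₂)
        (ξ ⟨true :: σ, by simpa using hσ⟩ m₃)) ∧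
    (∃ m₂ m₃ : Fin s, (m₂ = i ∨ m₂ = j) ∧ (m₃ = i ∨ m₃ = j) ∧
      IsTripodOn G (torsoSet Tr X η I σ hσ) Lj cj
        (ξ ⟨σ, Nat.le_of_succ_le hσ⟩ j)
        (ξ ⟨false :: σ, by simpa using hσ⟩ m₂)
        (ξ ⟨true :: σ, by simpa using hσ⟩ m₃)) ∧
    Disjoint Li.verts Lj.verts

/-- The major vertex `σ` has property `B_{ij}`: there are two tripods `L_i`, `L_j` in the
`η`-torso at `σ`, with feet `v_{m,1}, v_{m,2}, v_{m,3}` where `{v_{i,y}, v_{j,y}}` equals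
`{ξ_{t_y} i, ξ_{t_y} j}` for each `y`, which intersect exactly in a path that is the
intersection of the branch of `L_i` to `v_{i,3}` and the branch of `L_j` to `v_{j,2}`,
and which avoids both centers. -/
def HasPropB {V T : Type*} (G : SimpleGraph V) (Tr : SimpleGraph T) (X : T → Finset V)
    {h s : ℕ} (η : TVert h → T) (I : Finset V) (ξ : MVert h → Fin s → V)
    (σ : List Bool) (hσ : σ.length + 1 ≤ h) (i j : Fin s) : Prop :=
  ∃ (vi vj : Fin 3 → V) (ci cj : V)
    (Wi : ∀ y : Fin 3, G.Walk ci (vi y)) (Wj : ∀ y : Fin 3, G.Walk cj (vj y)),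
    (∀ y : Fin 3, ({vi y, vj y} : Set V) =
      {(![ξ ⟨σ, Nat.le_of_succ_le hσ⟩,
          ξ ⟨false :: σ, by simpa using hσ⟩,
          ξ ⟨true :: σ, by simpa using hσ⟩] : Fin 3 → Fin s → V) y i,
       (![ξ ⟨σ, Nat.le_of_succ_le hσ⟩,
          ξ ⟨false :: σ, by simpa using hσ⟩,
          ξ ⟨true :: σ, by simpa using hσ⟩] : Fin 3 → Fin s → V) y j}) ∧
    (∀ y, (Wi y).IsPath) ∧ (∀ y, (Wj y).IsPath) ∧
    (∀ y, ∀ v ∈ (Wi y).support, v ∈ torsoSet Tr X η I σ hσ) ∧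
    (∀ y, ∀ v ∈ (Wj y).support, v ∈ torsoSet Tr X η I σ hσ) ∧
    (∀ y y' : Fin 3, y ≠ y' → ∀ v, v ∈ (Wi y).support → v ∈ (Wi y').support → v = ci) ∧
    (∀ y y' : Fin 3, y ≠ y' → ∀ v, v ∈ (Wj y).support → v ∈ (Wj y').support → v = cj) ∧
    ((1 ≤ (Wi 0).length ∧ 1 ≤ (Wi 1).length) ∨ (1 ≤ (Wi 0).length ∧ 1 ≤ (Wi 2).length) ∨
      (1 ≤ (Wi 1).length ∧ 1 ≤ (Wi 2).length)) ∧
    ((1 ≤ (Wj 0).length ∧ 1 ≤ (Wj 1).length) ∨ (1 ≤ (Wj 0).length ∧ 1 ≤ (Wj 2).length) ∨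
      (1 ≤ (Wj 1).length ∧ 1 ≤ (Wj 2).length)) ∧
    (((Wi 0).toSubgraph ⊔ (Wi 1).toSubgraph ⊔ (Wi 2).toSubgraph) ⊓
      ((Wj 0).toSubgraph ⊔ (Wj 1).toSubgraph ⊔ (Wj 2).toSubgraph)
        = (Wi 2).toSubgraph ⊓ (Wj 1).toSubgraph) ∧
    ∃ (x y : V) (p : G.Walk x y), p.IsPath ∧
      (Wi 2).toSubgraph ⊓ (Wj 1).toSubgraph = p.toSubgraph ∧
      ci ∉ p.support ∧ cj ∉ p.support

/-- The major vertex `σ` has property `AB_{ij}`: in the `η`-torso at `σ` there are disjoint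
paths `L_i, L_j` from `ξ_{t₁}(m)` to `ξ_{t₂}(m)` and disjoint paths `R_i, R_j` from
`ξ_{t₁}(m)` to `ξ_{t₃}(m)`, for `m ∈ {i, j}`. -/
def HasPropAB {V T : Type*} (G : SimpleGraph V) (Tr : SimpleGraph T) (X : T → Finset V)
    {h s : ℕ} (η : TVert h → T) (I : Finset V) (ξ : MVert h → Fin s → V)
    (σ : List Bool) (hσ : σ.length + 1 ≤ h) (i j : Fin s) : Prop :=
  ∃ (Li : G.Walk (ξ ⟨σ, Nat.le_of_succ_le hσ⟩ i) (ξ ⟨false :: σ, by simpa using hσ⟩ i))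
    (Lj : G.Walk (ξ ⟨σ, Nat.le_of_succ_le hσ⟩ j) (ξ ⟨false :: σ, by simpa using hσ⟩ j))
    (Ri : G.Walk (ξ ⟨σ, Nat.le_of_succ_le hσ⟩ i) (ξ ⟨true :: σ, by simpa using hσ⟩ i))
    (Rj : G.Walk (ξ ⟨σ, Nat.le_of_succ_le hσ⟩ j) (ξ ⟨true :: σ, by simpa using hσ⟩ j)),
    Li.IsPath ∧ Lj.IsPath ∧ Ri.IsPath ∧ Rj.IsPath ∧
    (∀ v ∈ Li.support, v ∈ torsoSet Tr X η I σ hσ) ∧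
    (∀ v ∈ Lj.support, v ∈ torsoSet Tr X η I σ hσ) ∧
    (∀ v ∈ Ri.support, v ∈ torsoSet Tr X η I σ hσ) ∧
    (∀ v ∈ Rj.support, v ∈ torsoSet Tr X η I σ hσ) ∧
    (∀ v ∈ Li.support, v ∉ Lj.support) ∧
    (∀ v ∈ Ri.support, v ∉ Rj.support)

/-- A monotone homeomorphic embedding `T_a ↪ T_h`: the minor root maps to the minor root,
and for every major vertex with trinity `(t₁, t₂, t₃)`, the images of `t₂` and `t₃` are the
left and right neighbors of the (major) image of the vertex. -/
def IsMonotoneEmb (a h : ℕ) (γ : TVert a → TVert h) : Prop :=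
  IsHomeoEmb (Tgraph a) (Tgraph h) γ ∧
  γ (Sum.inl ⟨[], Nat.zero_le a⟩) = Sum.inl ⟨[], Nat.zero_le h⟩ ∧
  ∀ (σ : List Bool) (hσ : σ.length + 1 ≤ a),
    ∃ (τ : List Bool) (hτ : τ.length + 1 ≤ h),
      γ (Sum.inr ⟨σ, hσ⟩) = Sum.inr ⟨τ, hτ⟩ ∧
      γ (Sum.inl ⟨false :: σ, by simpa using hσ⟩) = Sum.inl ⟨false :: τ, by simpa using hτ⟩ ∧
      γ (Sum.inl ⟨true :: σ, by simpa using hσ⟩) = Sum.inl ⟨true :: τ, by simpa using hτ⟩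

/-!
Large path-width yields a minor model of a tall binary tree: otherwise submodularity of boundaries
and Menger's theorem let one sweep through the graph with small boundaries. In a 2-connected graph
such a model can be cut off from an edge `st`, which leaves a *based region*: a connected set `C`
that carries a model of a tall binary tree and has no vertex separating it from the ends `s`, `t`.

If `𝒫_k` is not a minor, a based region with ends `S` and `T` contains two disjoint based regions of
smaller but still large height, which after enlarging the ends are either in parallel, both having
ends `S` and `T`, or in series, with ends `S`, `W` and `W`, `T`. Two rooted models of `𝒫_a` found in
parallel combine to one of `𝒫_{a+1}`. Two rooted models of `𝒬_l` found in series combine to one of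
`𝒬_{l+1}`, the shared end `W` being the new apex. A double induction on `a` and `l` therefore ends
with `𝒫_k` or `𝒬_k`.
-/

namespace PathwidthMinors

/-! ### Connected sets of vertices -/

section Connected

variable {V : Type*} {G H : SimpleGraph V} {U X Y Z P : Set V}

/-- A vertex set is connected in `G` if it induces a connected (in particular nonempty)
subgraph; branch sets of minor models are of this kind. -/
def SetConnected (G : SimpleGraph V) (X : Set V) : Prop :=
  (G.induce X).Connected

/-- Some edge of `G` has one end in `X` and the other in `Y`. The sets may overlap, and sharing a
vertex alone does not count as touching. -/
def Touches (G : SimpleGraph V) (X Y : Set V) : Prop :=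
  ∃ x ∈ X, ∃ y ∈ Y, G.Adj x y

theorem Touches.symm (h : Touches G X Y) : Touches G Y X := by
  obtain ⟨x, hx, y, hy, hxy⟩ := h
  exact ⟨y, hy, x, hx, hxy.symm⟩

theorem Touches.mono {X' Y' : Set V} (h : Touches G X Y) (hX : X ⊆ X') (hY : Y ⊆ Y') :
    Touches G X' Y' := by
  obtain ⟨x, hx, y, hy, hxy⟩ := h
  exact ⟨x, hX hx, y, hY hy, hxy⟩

namespace SetConnected

theorem nonempty (hX : SetConnected G X) : X.Nonempty :=
  Set.nonempty_coe_sort.1 (SimpleGraph.Connected.nonempty hX)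

theorem singleton (G : SimpleGraph V) (x : V) : SetConnected G {x} :=
  SimpleGraph.Connected.mk .of_subsingleton

theorem union (hX : SetConnected G X) (hY : SetConnected G Y) (h : (X ∩ Y).Nonempty) :
    SetConnected G (X ∪ Y) :=
  induce_union_connected hX.preconnected hY.preconnected h

theorem union_of_touches (hX : SetConnected G X) (hY : SetConnected G Y) (h : Touches G X Y) :
    SetConnected G (X ∪ Y) := by
  obtain ⟨x, hx, y, hy, hxy⟩ := h
  exact connected_induce_union hX.preconnected hY.preconnected hx hy hxy

theorem insert (hX : SetConnected G X) {v x : V} (hx : x ∈ X) (hvx : G.Adj v x) :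
    SetConnected G (insert v X) :=
  (singleton G v).union_of_touches hX ⟨v, rfl, x, hx, hvx⟩

theorem mono (hX : SetConnected G X) (hGH : G ≤ H) : SetConnected H X :=
  SimpleGraph.Connected.mono (SimpleGraph.comap_monotone _ hGH) hX

theorem touches (h : SetConnected G (X ∪ Y)) (hX : X.Nonempty) (hY : Y.Nonempty)
    (hd : Disjoint X Y) : Touches G X Y := by
  obtain ⟨x, hx⟩ := hX
  obtain ⟨y, hy⟩ := hY
  obtain ⟨w⟩ := h.preconnected ⟨x, .inl hx⟩ ⟨y, .inr hy⟩
  obtain ⟨d, -, hd₁, hd₂⟩ := w.exists_boundary_dart (Subtype.val ⁻¹' X) hx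
    (Set.disjoint_right.1 hd hy)
  exact ⟨_, hd₁, _, d.snd.2.resolve_left hd₂, d.adj⟩

theorem touches_diff (hX : SetConnected G X) (h : (X ∩ P).Nonempty) (h' : (X \ P).Nonempty) :
    Touches G (X ∩ P) (X \ P) := by
  refine touches ?_ h h' (by grind)
  rwa [Set.inter_union_sdiff]

theorem subset_of_not_touches (hX : SetConnected G X) (h : (X ∩ P).Nonempty)
    (hP : ¬ Touches G (X ∩ P) (X \ P)) : X ⊆ P := by
  by_contra hXP
  exact hP (hX.touches_diff h (Set.sdiff_nonempty.2 hXP))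

theorem of_forall_touches (hX : X.Nonempty)
    (h : ∀ P ⊆ X, P.Nonempty → (X \ P).Nonempty → Touches G P (X \ P)) : SetConnected G X := by
  refine (SimpleGraph.connected_iff _).2 ⟨?_, hX.to_subtype⟩
  intro x y
  by_contra hxy
  obtain ⟨_, ⟨u, hu, rfl⟩, v, hv, huv⟩ :=
    h (Subtype.val '' {z | (G.induce X).Reachable x z}) (by grind) ⟨x, x, .refl _, rfl⟩
      ⟨y, y.2, by rintro ⟨z, hz, hzy⟩; exact hxy (Subtype.ext hzy ▸ hz)⟩
  exact hv.2 ⟨⟨v, hv.1⟩, hu.trans (SimpleGraph.Adj.reachable (by simpa using huv)), rfl⟩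

/-- Every piece of `U \ P` still reaches `Y`, since `Y` contains all neighbours of `P` in `U`. -/
theorem diff (hU : SetConnected G U) (hY : SetConnected G Y) (hYU : Y ⊆ U) (hPY : Disjoint P Y)
    (hP : ¬ Touches G P (U \ (P ∪ Y))) : SetConnected G (U \ P) := by
  have exits : ∀ R ⊆ U \ P, R.Nonempty → Disjoint Y R → ((U \ P) \ R).Nonempty →
      Touches G R ((U \ P) \ R) := by
    intro R hR hRne hYR ⟨z, hz⟩
    have hUR : U ∩ R = R := by grind
    obtain ⟨a, ha, b, hb, hab⟩ := hU.touches_diff (P := R) (by rwa [hUR]) ⟨z, by grind⟩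
    by_cases hbP : b ∈ P
    · exact absurd ⟨b, hbP, a, by grind, hab.symm⟩ hP
    · exact ⟨a, by grind, b, by grind, hab⟩
  refine of_forall_touches (hY.nonempty.mono (by grind)) fun R hR hRne hne => ?_
  by_cases hYR : Disjoint Y R
  · exact exits R hR hRne hYR hne
  by_cases hYR' : Y ⊆ R
  · have := exits ((U \ P) \ R) (by grind) hne (by grind) (hRne.mono (by grind))
    exact this.symm.mono (by grind) subset_rfl
  · exact (hY.touches_diff (Set.not_disjoint_iff_nonempty_inter.1 hYR)
      (Set.sdiff_nonempty.2 hYR')).mono (by grind) (by grind)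

theorem exists_component (hY : SetConnected G Y) (hYX : Y ⊆ X) :
    ∃ P, Y ⊆ P ∧ P ⊆ X ∧ SetConnected G P ∧ ¬ Touches G P (X \ P) := by
  let F : Set (Set V) := {Z | Y ⊆ Z ∧ Z ⊆ X ∧ SetConnected G Z}
  have hYF : Y ∈ F := ⟨subset_rfl, hYX, hY⟩
  refine ⟨⋃₀ F, Set.subset_sUnion_of_mem hYF, Set.sUnion_subset fun Z hZ => hZ.2.1, ?_, ?_⟩
  · exact induce_sUnion_connected_of_pairwise_not_disjoint ⟨Y, hYF⟩
      (fun hZ hW => hY.nonempty.mono (Set.subset_inter hZ.1 hW.1)) fun hZ => hZ.2.2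
  · rintro ⟨a, ⟨Z, hZ, haZ⟩, b, ⟨hbX, hb⟩, hab⟩
    exact hb ⟨Insert.insert b Z, ⟨hZ.1.trans (Set.subset_insert _ _),
      Set.insert_subset hbX hZ.2.1, hZ.2.2.insert haZ hab.symm⟩, Set.mem_insert _ _⟩

theorem exists_connected_bipartition {Y₁ Y₂ : Set V} (hU : SetConnected G U)
    (h₁ : SetConnected G Y₁) (h₂ : SetConnected G Y₂) (hY₁ : Y₁ ⊆ U) (hY₂ : Y₂ ⊆ U)
    (hd : Disjoint Y₁ Y₂) :
    ∃ P, Y₁ ⊆ P ∧ P ⊆ U \ Y₂ ∧ SetConnected G P ∧ SetConnected G (U \ P) ∧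
      ¬ Touches G P (U \ (P ∪ Y₂)) := by
  obtain ⟨P, hYP, hPU, hP, hPcl⟩ := h₁.exists_component (X := U \ Y₂) (by grind)
  have hPY₂ : ¬ Touches G P (U \ (P ∪ Y₂)) := by
    rwa [Set.sdiff_sdiff, Set.union_comm] at hPcl
  exact ⟨P, hYP, hPU, hP, hU.diff h₂ hY₂ (by grind) hPY₂, hPY₂⟩

end SetConnected

end Connected

/-! ### Menger's theorem for connected sets -/

section Menger

variable {V : Type*} {G : SimpleGraph V} {A B P Q P₁ Q₁ S : Set V} {x y : V} {k : ℕ}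

/-- `(P, Q)` is a separation of `G` with `A` on the first side and `B` on the second; its order is
`(P ∩ Q).ncard`. -/
structure IsSeparation (G : SimpleGraph V) (A B P Q : Set V) : Prop where
  union_eq : P ∪ Q = Set.univ
  left_subset : A ⊆ P
  right_subset : B ⊆ Q
  not_touches : ¬ Touches G (P \ Q) (Q \ P)

/-- `A` and `B` are linked by `k` disjoint connected sets. These play the role of `k` disjoint
`A`–`B` paths. -/
def Linked (G : SimpleGraph V) (k : ℕ) (A B : Set V) : Prop :=
  ∃ f : Fin k → Set V, Pairwise (Function.onFun Disjoint f) ∧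
    ∀ i, SetConnected G (f i) ∧ (f i ∩ A).Nonempty ∧ (f i ∩ B).Nonempty

/-- A system of disjoint connected sets `f s`, one through each `s ∈ S`, all lying in `P` and
meeting `A`. Indexing by the end `s` makes two such systems easy to glue. -/
structure IsLinkageInto (G : SimpleGraph V) (A S P : Set V) (f : V → Set V) : Prop where
  connected : ∀ s ∈ S, SetConnected G (f s)
  mem : ∀ s ∈ S, s ∈ f s
  meets : ∀ s ∈ S, (f s ∩ A).Nonempty
  subset : ∀ s ∈ S, f s ⊆ P
  pairwiseDisjoint : S.PairwiseDisjoint f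

theorem IsSeparation.symm (h : IsSeparation G A B P Q) : IsSeparation G B A Q P :=
  ⟨Set.union_comm P Q ▸ h.union_eq, h.right_subset, h.left_subset,
    fun ht => h.not_touches ht.symm⟩

theorem IsSeparation.mem_or_mem (h : IsSeparation G A B P Q) (v : V) : v ∈ P ∨ v ∈ Q :=
  (Set.mem_union v P Q).1 (h.union_eq ▸ Set.mem_univ v)

theorem SetConnected.subset_of_spanningCoe {X : Set V}
    (hX : SetConnected (G.induce P).spanningCoe X) (h : (X ∩ P).Nonempty) : X ⊆ P := by
  refine hX.subset_of_not_touches h ?_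
  rintro ⟨a, -, b, hb, hab⟩
  obtain ⟨-, -, b', -, -, rfl⟩ := hab
  exact hb.2 b'.2

theorem Linked.of_forall_mem [Finite V] {f : V → Set V} (hS : S.ncard = k)
    (hd : S.PairwiseDisjoint f)
    (hf : ∀ s ∈ S, SetConnected G (f s) ∧ (f s ∩ A).Nonempty ∧ (f s ∩ B).Nonempty) :
    Linked G k A B := by
  let e : Fin k ≃ S := (Finite.equivFinOfCardEq (by rwa [Nat.card_coe_set_eq])).symm
  refine ⟨fun i => f (e i), fun i j hij => ?_, fun i => hf _ (e i).2⟩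
  exact hd (e i).2 (e j).2 fun h => hij (e.injective (Subtype.ext h))

theorem Linked.exists_isLinkageInto [Finite V] (h : Linked (G.induce P).spanningCoe k A S)
    (hA : A ⊆ P) (hS : S.ncard = k) : ∃ f, IsLinkageInto G A S P f := by
  obtain ⟨f, hd, hf⟩ := h
  choose d hdf hdS using fun i => (hf i).2.2
  have hinj : Function.Injective d := fun i j hij => by
    by_contra hne
    exact Set.disjoint_left.1 (hd hne) (hdf i) (hij ▸ hdf j)
  have hrange : Set.range d = S := by
    refine Set.eq_of_subset_of_ncard_le (Set.range_subset_iff.2 hdS) ?_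
    rw [hS, Set.ncard_range_of_injective hinj, Nat.card_eq_fintype_card, Fintype.card_fin]
  have hgd := hinj.extend_apply f fun _ => ∅
  have hfP : ∀ i, f i ⊆ P := fun i =>
    (hf i).1.subset_of_spanningCoe ((hf i).2.1.mono (Set.inter_subset_inter_right _ hA))
  subst hrange
  refine ⟨Function.extend d f fun _ => ∅, ?_, ?_, ?_, ?_, ?_⟩
  · rintro _ ⟨i, rfl⟩
    exact hgd i ▸ (hf i).1.mono (spanningCoe_induce_le _ _)
  · rintro _ ⟨i, rfl⟩
    exact hgd i ▸ hdf i
  · rintro _ ⟨i, rfl⟩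
    exact hgd i ▸ (hf i).2.1
  · rintro _ ⟨i, rfl⟩
    exact hgd i ▸ hfP i
  · rintro _ ⟨i, rfl⟩ _ ⟨j, rfl⟩ hij
    simpa only [Function.onFun, hgd] using hd (ne_of_apply_ne d hij)

theorem IsSeparation.insert_of_deleteEdges (hx : x ∈ P)
    (h : IsSeparation (G.deleteEdges {s(x, y)}) A B P Q) :
    IsSeparation G A B P (insert x Q) := by
  refine ⟨by simp [h.union_eq], h.left_subset, h.right_subset.trans (Set.subset_insert _ _), ?_⟩
  rintro ⟨a, ⟨haP, ha⟩, b, ⟨hb, hbP⟩, hab⟩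
  refine h.not_touches ⟨a, by grind, b, by grind, ?_⟩
  rw [deleteEdges_adj]
  grind

theorem IsSeparation.glue_of_deleteEdges (hy : y ∉ P)
    (h : IsSeparation (G.deleteEdges {s(x, y)}) A B P Q)
    (h₁ : IsSeparation ((G.deleteEdges {s(x, y)}).induce P).spanningCoe A
      (insert x (P ∩ Q)) P₁ Q₁) :
    IsSeparation G A B (P₁ ∩ P) (Q₁ ∩ P ∪ Q) := by
  have hcov := h.mem_or_mem
  have hcov₁ := h₁.mem_or_mem
  have hxQ₁ : x ∈ Q₁ := h₁.right_subset (Set.mem_insert _ _)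
  refine ⟨by ext v; grind, Set.subset_inter h₁.left_subset h.left_subset,
    h.right_subset.trans Set.subset_union_right, ?_⟩
  rintro ⟨a, ⟨⟨haP₁, haP⟩, ha⟩, b, ⟨_, hb⟩, hab⟩
  have hab' : (G.deleteEdges {s(x, y)}).Adj a b := by
    rw [deleteEdges_adj]
    grind
  by_cases hbP : b ∈ P
  · exact h₁.not_touches ⟨a, by grind, b, by grind, by simpa [haP, hbP] using hab'⟩
  · exact h.not_touches ⟨a, by grind, b, by grind, hab'⟩

/-- A separation of order `< k` created by deleting the edge `xy` becomes one of order `≥ k` after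
adding `x`, so `insert x (P ∩ Q)` has exactly `k` elements, and induction applies to `G[P]`. -/
theorem IsSeparation.exists_isLinkageInto [Finite V]
    (hx : x ∈ P) (hy : y ∉ P) (h : IsSeparation (G.deleteEdges {s(x, y)}) A B P Q)
    (hlt : (P ∩ Q).ncard < k) (hG : ∀ P Q, IsSeparation G A B P Q → k ≤ (P ∩ Q).ncard)
    (ih : ∀ A B, (∀ P₁ Q₁, IsSeparation ((G.deleteEdges {s(x, y)}).induce P).spanningCoe A B P₁ Q₁ →
      k ≤ (P₁ ∩ Q₁).ncard) → Linked ((G.deleteEdges {s(x, y)}).induce P).spanningCoe k A B) :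
    (insert x (P ∩ Q)).ncard = k ∧ ∃ f, IsLinkageInto G A (insert x (P ∩ Q)) P f := by
  have hcard : (insert x (P ∩ Q)).ncard = k := by
    have := hG _ _ (h.insert_of_deleteEdges hx)
    rw [Set.inter_insert_of_mem hx] at this
    have := Set.ncard_insert_le x (P ∩ Q)
    lia
  refine ⟨hcard, ?_⟩
  have hlinked : Linked ((G.deleteEdges {s(x, y)}).induce P).spanningCoe k A
      (insert x (P ∩ Q)) := by
    refine ih _ _ fun P₁ Q₁ h₁ => (hG _ _ (h.glue_of_deleteEdges hy h₁)).trans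
      (Set.ncard_le_ncard ?_)
    have := h₁.right_subset
    grind
  obtain ⟨f, hf⟩ := hlinked.exists_isLinkageInto h.left_subset hcard
  exact ⟨f, fun s hs => (hf.connected s hs).mono (deleteEdges_le _), hf.mem, hf.meets, hf.subset,
    hf.pairwiseDisjoint⟩

theorem IsLinkageInto.linked [Finite V] {f g : V → Set V} (hxy : G.Adj x y)
    (hy : y ∉ P) (hk : (insert x (P ∩ Q)).ncard = k)
    (hf : IsLinkageInto G A (insert x (P ∩ Q)) P f)
    (hg : IsLinkageInto G B (insert y (P ∩ Q)) Q g) : Linked G k A B := by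
  classical
  let φ : V → V := fun s => if s = x then y else s
  have hφ : ∀ s ∈ insert x (P ∩ Q), φ s ∈ insert y (P ∩ Q) := by grind
  have hinj : Set.InjOn φ (insert x (P ∩ Q)) := by intro s hs t ht; grind
  have hcross : ∀ s ∈ insert x (P ∩ Q), ∀ t ∈ insert x (P ∩ Q), s ≠ t →
      Disjoint (f s) (g (φ t)) := by
    refine fun s hs t ht hst => Set.disjoint_left.2 fun z hzf hzg => ?_
    have hz : z ∈ P ∩ Q := ⟨hf.subset s hs hzf, hg.subset _ (hφ t ht) hzg⟩
    have hzs : z = s := hf.pairwiseDisjoint.elim_set (.inr hz) hs z (hf.mem z (.inr hz)) hzf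
    have hzt : z = φ t :=
      hg.pairwiseDisjoint.elim_set (.inr hz) (hφ t ht) z (hg.mem z (.inr hz)) hzg
    grind
  refine .of_forall_mem (f := fun s => f s ∪ g (φ s)) hk ?_ fun s hs => ⟨?_, ?_, ?_⟩
  · intro s hs t ht hst
    have h₁ := hf.pairwiseDisjoint hs ht hst
    have h₂ := hg.pairwiseDisjoint (hφ s hs) (hφ t ht) (hinj.ne hs ht hst)
    have h₃ := hcross s hs t ht hst
    have h₄ := hcross t ht s hs hst.symm
    simp only [Function.onFun, Set.disjoint_union_left, Set.disjoint_union_right] at *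
    exact ⟨⟨h₁, h₄.symm⟩, h₃, h₂⟩
  · by_cases hsx : s = x
    · refine (hf.connected s hs).union_of_touches (hg.connected _ (hφ s hs))
        ⟨x, hsx ▸ hf.mem s hs, y, ?_, hxy⟩
      simpa [φ, hsx] using hg.mem _ (hφ s hs)
    · refine (hf.connected s hs).union (hg.connected _ (hφ s hs)) ⟨s, hf.mem s hs, ?_⟩
      simpa [φ, hsx] using hg.mem _ (hφ s hs)
  · exact (hf.meets s hs).mono (by grind)
  · exact (hg.meets _ (hφ s hs)).mono (by grind)

theorem linked_of_forall_not_adj [Finite V] (hG : ∀ x y, ¬ G.Adj x y)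
    (h : ∀ P Q, IsSeparation G A B P Q → k ≤ (P ∩ Q).ncard) : Linked G k A B := by
  have hAB : k ≤ (A ∩ (Aᶜ ∪ B)).ncard :=
    h _ _ ⟨by grind, subset_rfl, Set.subset_union_right, fun ⟨x, _, y, _, hxy⟩ => hG x y hxy⟩
  obtain ⟨S, hS, hSk⟩ := Set.exists_subset_card_eq hAB
  exact .of_forall_mem (f := fun s => {s}) hSk (fun s _ t _ hst => by simpa using hst)
    fun s hs => ⟨.singleton G s, ⟨s, rfl, by grind⟩, ⟨s, rfl, by grind⟩⟩

theorem linked_of_forall_isSeparation [Finite V] (k : ℕ) (G : SimpleGraph V) (A B : Set V)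
    (h : ∀ P Q, IsSeparation G A B P Q → k ≤ (P ∩ Q).ncard) : Linked G k A B := by
  induction G using WellFoundedLT.induction generalizing A B with
  | ind G ih =>
  by_cases hE : ∀ x y, ¬ G.Adj x y
  · exact linked_of_forall_not_adj hE h
  push Not at hE
  obtain ⟨x₀, y₀, he⟩ := hE
  have hlt : G.deleteEdges {s(x₀, y₀)} < G := by
    refine (deleteEdges_le _).lt_of_ne fun heq => ?_
    rw [← heq] at he
    simp at he
  by_cases h' : ∀ P Q, IsSeparation (G.deleteEdges {s(x₀, y₀)}) A B P Q → k ≤ (P ∩ Q).ncard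
  · obtain ⟨f, hd, hf⟩ := ih _ hlt A B h'
    exact ⟨f, hd, fun i => ⟨(hf i).1.mono hlt.le, (hf i).2⟩⟩
  push Not at h'
  obtain ⟨P, Q, hPQ, hlt'⟩ := h'
  obtain ⟨x, hx, y, hy, hxy⟩ : Touches G (P \ Q) (Q \ P) := by
    by_contra hcon
    exact hlt'.not_ge (h P Q ⟨hPQ.union_eq, hPQ.left_subset, hPQ.right_subset, hcon⟩)
  have he' : s(x₀, y₀) = s(x, y) := by
    by_contra hne
    refine hPQ.not_touches ⟨x, hx, y, hy, ?_⟩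
    rw [deleteEdges_adj]
    grind
  rw [he'] at hPQ hlt
  obtain ⟨hk, f, hf⟩ := hPQ.exists_isLinkageInto hx.1 hy.2 hlt' h
    (ih _ ((spanningCoe_induce_le _ _).trans_lt hlt))
  rw [Sym2.eq_swap] at hPQ hlt
  rw [Set.inter_comm] at hlt'
  obtain ⟨-, g, hg⟩ := hPQ.symm.exists_isLinkageInto hy.1 hx.2 hlt'
    (fun P Q h' => Set.inter_comm P Q ▸ h Q P h'.symm)
    (ih _ ((spanningCoe_induce_le _ _).trans_lt hlt))
  rw [Set.inter_comm] at hg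
  exact hf.linked hxy hy.2 hk hg

end Menger

/-! ### Sweeps and large path-width -/

section Sweep

variable {V : Type*} {G : SimpleGraph V} {X Y Z : Set V} {w i : ℕ}

/-- The vertices of `X` with a neighbour outside `X`. -/
def boundary (G : SimpleGraph V) (X : Set V) : Set V :=
  {v | v ∈ X ∧ ∃ u ∉ X, G.Adj v u}

/-- `X` is obtained from `∅` by adding vertices one at a time, where every set to which a vertex is
added has boundary at most `w`. If all vertices can be swept up in this way, then `G` has
path-width at most `w`. -/
inductive Sweepable (G : SimpleGraph V) (w : ℕ) : Set V → Prop
  | empty : Sweepable G w ∅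
  | step {X : Set V} {u : V} : Sweepable G w X → u ∉ X → (boundary G X).ncard ≤ w →
      Sweepable G w (insert u X)

theorem mem_boundary {v : V} : v ∈ boundary G X ↔ v ∈ X ∧ ∃ u ∉ X, G.Adj v u :=
  Iff.rfl

theorem boundary_subset (G : SimpleGraph V) (X : Set V) : boundary G X ⊆ X :=
  fun _ hv => hv.1

theorem boundary_empty (G : SimpleGraph V) : boundary G ∅ = ∅ :=
  Set.subset_empty_iff.1 (boundary_subset G ∅)

theorem ncard_boundary_inter_add_ncard_boundary_union_le [Finite V] (G : SimpleGraph V)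
    (X Y : Set V) : (boundary G (X ∩ Y)).ncard + (boundary G (X ∪ Y)).ncard ≤
      (boundary G X).ncard + (boundary G Y).ncard := by
  rw [← Set.ncard_union_add_ncard_inter (boundary G (X ∩ Y)),
    ← Set.ncard_union_add_ncard_inter (boundary G X)]
  refine add_le_add (Set.ncard_le_ncard ?_) (Set.ncard_le_ncard ?_)
  · intro v hv
    simp only [Set.mem_union, mem_boundary] at hv ⊢
    grind
  · intro v hv
    simp only [Set.mem_inter_iff, mem_boundary] at hv ⊢
    grind

theorem Sweepable.exists_position [Finite V] (h : Sweepable G w X) :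
    ∃ (n : ℕ) (pos : V → ℕ), (∀ v ∈ X, pos v < n) ∧ Set.InjOn pos X ∧
      ∀ i < n, (boundary G {v ∈ X | pos v < i}).ncard ≤ w := by
  classical
  induction h with
  | empty => exact ⟨0, fun _ => 0, by simp⟩
  | @step X u _ hu hw ih =>
    obtain ⟨n, pos, hlt, hinj, hbd⟩ := ih
    refine ⟨n + 1, Function.update pos u n, by grind, ?_, fun i hi => ?_⟩
    · have hne : ∀ v ∈ X, v ≠ u := fun v hv hvu => hu (hvu ▸ hv)
      intro a ha b hb hab
      rcases ha with rfl | ha <;> rcases hb with rfl | hb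
      · rfl
      · have := hlt b hb
        grind
      · have := hlt a ha
        grind
      · exact hinj ha hb (by simpa [hne a ha, hne b hb] using hab)
    have hinit : {v ∈ insert u X | Function.update pos u n v < i} = {v ∈ X | pos v < i} := by
      ext v
      rcases eq_or_ne v u with rfl | hv
      · simp [hu, Nat.lt_succ_iff.1 hi]
      · simp [hv]
    rw [hinit]
    rcases (Nat.lt_succ_iff.1 hi).lt_or_eq with hi | rfl
    · exact hbd i hi
    · rwa [Set.sep_eq_self_iff_mem_true.2 hlt]

theorem Sweepable.pathwidth_le [Fintype V] (h : Sweepable G w Set.univ) : pathwidth G ≤ w := by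
  classical
  obtain ⟨n, pos, hlt, hinj, hbd⟩ := h.exists_position
  simp only [Set.mem_univ, true_and, forall_const, Set.injOn_univ] at hlt hinj hbd
  let bag (i : ℕ) : Set V := {v | pos v = i} ∪ boundary G {v | pos v < i}
  have mem_bag : ∀ v i, v ∈ bag i ↔ pos v = i ∨ pos v < i ∧ ∃ u, i ≤ pos u ∧ G.Adj v u := by
    simp [bag, mem_boundary]
  refine Nat.sInf_le ⟨n, fun i => (bag i).toFinset, ⟨fun v => ⟨⟨pos v, hlt v⟩, by simp [bag]⟩,
    fun u v huv => ?_, fun i j k hij hjk v hi hk => ?_⟩, fun i => ?_⟩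
  · have hne : pos u ≠ pos v := hinj.ne huv.ne
    simp only [Set.mem_toFinset, mem_bag]
    rcases hne.lt_or_gt with h | h
    · exact ⟨⟨pos v, hlt v⟩, .inr ⟨h, v, le_rfl, huv⟩, .inl rfl⟩
    · exact ⟨⟨pos u, hlt u⟩, .inl rfl, .inr ⟨h, u, le_rfl, huv.symm⟩⟩
  · simp only [Set.mem_toFinset, mem_bag] at *
    grind
  · rw [← Set.ncard_eq_toFinset_card', add_comm]
    refine (Set.ncard_union_le _ _).trans (add_le_add ?_ (hbd i i.2))
    exact Set.ncard_le_one_iff_subsingleton.2 fun a ha b hb => hinj (ha.trans hb.symm)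

/-- If `Z` has minimum boundary among the sets between `Z` and `Y`, then intersecting a sweep of `Y`
with `Z` does not increase its boundaries, by submodularity. -/
theorem Sweepable.inter [Finite V] (h : Sweepable G w X) (hXY : X ⊆ Y) (hZY : Z ⊆ Y)
    (hmin : ∀ W, Z ⊆ W → W ⊆ Y → (boundary G Z).ncard ≤ (boundary G W).ncard) :
    Sweepable G w (X ∩ Z) := by
  induction h with
  | empty => simpa using Sweepable.empty
  | @step X u _ hu hw ih =>
    have hXY' : X ⊆ Y := (Set.subset_insert u X).trans hXY
    by_cases huZ : u ∈ Z
    · rw [Set.insert_inter_of_mem huZ]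
      refine (ih hXY').step (fun h => hu h.1) ?_
      have := ncard_boundary_inter_add_ncard_boundary_union_le G X Z
      have := hmin (X ∪ Z) Set.subset_union_right (Set.union_subset hXY' hZY)
      lia
    · rw [Set.insert_inter_of_notMem huZ]
      exact ih hXY'

theorem Sweepable.exists_maximal [Finite V] (h : Sweepable G w X) :
    ∃ Y, X ⊆ Y ∧ Sweepable G w Y ∧ (boundary G Y).ncard ≤ (boundary G X).ncard ∧
      ∀ Z, Sweepable G w Z → Y ⊂ Z → (boundary G X).ncard < (boundary G Z).ncard := by
  obtain ⟨Y, hXY, hY⟩ := (Set.toFinite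
    {Y | Sweepable G w Y ∧ (boundary G Y).ncard ≤ (boundary G X).ncard}).exists_le_maximal
    (a := X) ⟨h, le_rfl⟩
  refine ⟨Y, hXY, hY.1.1, hY.1.2, fun Z hZ hYZ => ?_⟩
  by_contra! hle
  exact hYZ.2 (hY.2 ⟨hZ, hle⟩ hYZ.1)

theorem Sweepable.linked_boundary [Finite V] (hY : Sweepable G w Y) (hXY : X ⊆ Y)
    (h : ∀ Z, X ⊆ Z → Sweepable G w Z → i ≤ (boundary G Z).ncard) :
    Linked (G.induce (Y \ X ∪ boundary G X)).spanningCoe i (boundary G Y) (boundary G X) := by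
  refine linked_of_forall_isSeparation _ _ _ _ fun P Q hPQ => ?_
  have hbd : boundary G (X ∪ Q ∩ Y) ⊆ P ∩ Q := by
    rintro v ⟨hv, u, hu, hvu⟩
    have hvR : v ∈ Y \ X ∪ boundary G X := by grind [mem_boundary]
    have hvQ : v ∈ Q := hvR.elim (by grind) fun h => hPQ.right_subset h
    refine ⟨?_, hvQ⟩
    by_contra hvP
    have huY : u ∈ Y := by
      by_contra huY
      exact hvP (hPQ.left_subset ⟨by grind, u, huY, hvu⟩)
    refine hPQ.symm.not_touches ⟨v, ⟨hvQ, hvP⟩, u, ?_, ?_⟩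
    · have := hPQ.mem_or_mem u
      grind
    · have huR : u ∈ Y \ X ∪ boundary G X := by grind
      simpa [-Set.mem_union, hvR, huR] using hvu
  obtain ⟨Z, ⟨hXZ, hZY⟩, hmin⟩ := Set.exists_min_image {Z | X ⊆ Z ∧ Z ⊆ Y}
    (fun Z => (boundary G Z).ncard) (Set.toFinite _) ⟨X, subset_rfl, hXY⟩
  have hZ : Sweepable G w (Y ∩ Z) :=
    hY.inter subset_rfl hZY fun W hZW hWY => hmin W ⟨hXZ.trans hZW, hWY⟩
  rw [Set.inter_eq_right.2 hZY] at hZ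
  calc i ≤ (boundary G Z).ncard := h Z hXZ hZ
    _ ≤ (boundary G (X ∪ Q ∩ Y)).ncard := hmin _ ⟨by grind, by grind⟩
    _ ≤ (P ∩ Q).ncard := Set.ncard_le_ncard hbd

/-- Branch sets `F 0, …, F (i - 1)` inside `X`, all reaching the boundary of `X`, of a model of the
tree in which the parent of `j > 0` is `par j`. -/
structure IsBoundaryModel (G : SimpleGraph V) (par : ℕ → ℕ) (i : ℕ) (F : ℕ → Set V)
    (X : Set V) : Prop where
  connected : ∀ j < i, SetConnected G (F j)
  subset : ∀ j < i, F j ⊆ X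
  meets : ∀ j < i, (F j ∩ boundary G X).Nonempty
  pairwiseDisjoint : (Set.Iio i).PairwiseDisjoint F
  touches : ∀ j < i, 0 < j → Touches G (F j) (F (par j))

variable {par : ℕ → ℕ} {F : ℕ → Set V}

theorem IsBoundaryModel.extend [Finite V] (hF : IsBoundaryModel G par i F X)
    (hY : Sweepable G w Y) (hXY : X ⊆ Y) (hX : (boundary G X).ncard = i)
    (h : ∀ Z, X ⊆ Z → Sweepable G w Z → i ≤ (boundary G Z).ncard) :
    ∃ F, IsBoundaryModel G par i F Y := by
  obtain ⟨g, hg⟩ := (hY.linked_boundary hXY h).exists_isLinkageInto (by grind [mem_boundary]) hX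
  rcases i.eq_zero_or_pos with rfl | hi
  · exact ⟨F, by constructor <;> simp⟩
  have : Nonempty V := ⟨(hF.meets 0 hi).some⟩
  choose! s hs using hF.meets
  have hgX : ∀ t ∈ boundary G X, g t ∩ X ⊆ {t} := by
    rintro t ht z ⟨hzg, hzX⟩
    have hz : z ∈ boundary G X := (hg.subset t ht hzg).resolve_left fun h => h.2 hzX
    exact hg.pairwiseDisjoint.elim_set hz ht z (hg.mem z hz) hzg
  have hcross : ∀ j < i, ∀ k < i, j ≠ k → Disjoint (F j) (g (s k)) := by
    refine fun j hj k hk hjk => Set.disjoint_left.2 fun z hzF hzg => ?_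
    obtain rfl := hgX _ (hs k hk).2 ⟨hzg, hF.subset j hj hzF⟩
    exact hjk (hF.pairwiseDisjoint.elim_set hj hk _ hzF (hs k hk).1)
  refine ⟨fun j => F j ∪ g (s j), fun j hj => ?_, fun j hj => ?_, fun j hj => ?_, ?_,
    fun j hj hj₀ => ?_⟩
  · exact (hF.connected j hj).union (hg.connected _ (hs j hj).2)
      ⟨s j, (hs j hj).1, hg.mem _ (hs j hj).2⟩
  · have := hF.subset j hj
    have := hg.subset _ (hs j hj).2
    grind [mem_boundary]
  · exact (hg.meets _ (hs j hj).2).mono (by grind)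
  · intro j hj k hk hjk
    have hsjk : s j ≠ s k := fun h =>
      hjk (hF.pairwiseDisjoint.elim_set hj hk _ (hs j hj).1 (h ▸ (hs k hk).1))
    simp only [Function.onFun, Set.disjoint_union_left, Set.disjoint_union_right]
    exact ⟨⟨hF.pairwiseDisjoint hj hk hjk, (hcross k hk j hj hjk.symm).symm⟩, hcross j hj k hk hjk,
      hg.pairwiseDisjoint (hs j hj).2 (hs k hk).2 hsjk⟩
  · exact (hF.touches j hj hj₀).mono Set.subset_union_left Set.subset_union_left

theorem IsBoundaryModel.update_insert (hpar : ∀ j, 0 < j → par j < j)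
    (hF : IsBoundaryModel G par i F X) {u : V} (hu : u ∉ X)
    (hbd : boundary G (insert u X) = insert u (boundary G X))
    (hupar : 0 < i → Touches G {u} (F (par i))) :
    IsBoundaryModel G par (i + 1) (Function.update F i {u}) (insert u X) := by
  have huF : ∀ j < i, u ∉ F j := fun j hj huF => hu (hF.subset j hj huF)
  have hlt : ∀ j < i, Function.update F i {u} j = F j := fun j hj =>
    Function.update_of_ne hj.ne _ _
  refine ⟨fun j hj => ?_, fun j hj => ?_, fun j hj => ?_, fun j hj k hk hjk => ?_,
    fun j hj hj₀ => ?_⟩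
  all_goals rcases Nat.lt_succ_iff_lt_or_eq.1 hj with hj | rfl
  · exact hlt j hj ▸ hF.connected j hj
  · simpa using .singleton G u
  · exact hlt j hj ▸ (hF.subset j hj).trans (Set.subset_insert u X)
  · simp
  · rw [hlt j hj, hbd]
    exact (hF.meets j hj).mono (by grind)
  · simp [hbd]
  · rcases Nat.lt_succ_iff_lt_or_eq.1 hk with hk | rfl
    · simpa only [Function.onFun, hlt j hj, hlt k hk] using hF.pairwiseDisjoint hj hk hjk
    · simpa [Function.onFun, hlt j hj] using huF j hj
  · have hk : k < j := by grind
    simpa [Function.onFun, hlt k hk] using huF k hk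
  · rw [hlt j hj, hlt _ ((hpar j hj₀).trans hj)]
    exact hF.touches j hj hj₀
  · rw [Function.update_self, hlt _ (hpar j hj₀)]
    exact hupar hj₀

theorem IsBoundaryModel.exists_insert [Finite V] (hpar : ∀ j, 0 < j → par j < j)
    (hF : IsBoundaryModel G par i F X) (hX : (boundary G X).ncard = i) (hne : X ≠ Set.univ)
    (h : ∀ u ∉ X, i < (boundary G (insert u X)).ncard) :
    ∃ u ∉ X, (boundary G (insert u X)).ncard = i + 1 ∧
      ∃ F, IsBoundaryModel G par (i + 1) F (insert u X) := by
  obtain ⟨u, hu, hupar⟩ : ∃ u ∉ X, 0 < i → Touches G {u} (F (par i)) := by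
    rcases i.eq_zero_or_pos with rfl | hi
    · obtain ⟨u, hu⟩ := (Set.ne_univ_iff_exists_notMem X).1 hne
      exact ⟨u, hu, by simp⟩
    · obtain ⟨v, hv, -, u, hu, hvu⟩ := hF.meets (par i) (hpar i hi)
      exact ⟨u, hu, fun _ => ⟨u, rfl, v, hv, hvu.symm⟩⟩
  have hbd : boundary G (insert u X) = insert u (boundary G X) := by
    refine Set.eq_of_subset_of_ncard_le (by grind [mem_boundary]) ?_
    have := Set.ncard_insert_le u (boundary G X)
    have := h u hu
    lia
  have hcard : (boundary G (insert u X)).ncard = i + 1 := by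
    rw [hbd, Set.ncard_insert_of_notMem (fun hu' => hu hu'.1), hX]
  exact ⟨u, hu, hcard, _, hF.update_insert hpar hu hbd hupar⟩

theorem exists_isBoundaryModel [Finite V] (hpar : ∀ j, 0 < j → par j < j)
    (h : ¬ Sweepable G w Set.univ) (hi : i ≤ w + 1) : ∃ F X, Sweepable G w X ∧
      (boundary G X).ncard = i ∧
      (∀ Y, Sweepable G w Y → X ⊂ Y → i < (boundary G Y).ncard) ∧ IsBoundaryModel G par i F X := by
  induction i with
  | zero =>
    obtain ⟨X, -, hX, hle, hmax⟩ := (Sweepable.empty (G := G) (w := w)).exists_maximal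
    simp only [boundary_empty, Set.ncard_empty, nonpos_iff_eq_zero] at hle hmax
    exact ⟨fun _ => ∅, X, hX, hle, hmax, by constructor <;> simp⟩
  | succ i ih =>
    obtain ⟨F, X, hX, hcard, hmax, hF⟩ := ih (by lia)
    have hinsert : ∀ u ∉ X, Sweepable G w (insert u X) := fun u hu => hX.step hu (by lia)
    obtain ⟨u, hu, hcard', F', hF'⟩ := hF.exists_insert hpar hcard (fun hX' => h (hX' ▸ hX))
      fun u hu => hmax _ (hinsert u hu) (Set.ssubset_insert hu)
    have hmin : ∀ Z, insert u X ⊆ Z → Sweepable G w Z → i + 1 ≤ (boundary G Z).ncard :=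
      fun Z hXZ hZ => hmax Z hZ ((Set.ssubset_insert hu).trans_subset hXZ)
    obtain ⟨Y, hXY, hY, hle, hmaxY⟩ := (hinsert u hu).exists_maximal
    rw [hcard'] at hle hmaxY
    obtain ⟨F'', hF''⟩ := hF'.extend hY hXY hcard' hmin
    exact ⟨F'', Y, hY, hle.antisymm (hmin Y hXY hY), hmaxY, hF''⟩

theorem exists_disjoint_connected_family [Fintype V] (hpar : ∀ j, 0 < j → par j < j)
    (h : w < pathwidth G) : ∃ F : ℕ → Set V, (∀ j ≤ w, SetConnected G (F j)) ∧
      (Set.Iic w).PairwiseDisjoint F ∧ ∀ j ≤ w, 0 < j → Touches G (F j) (F (par j)) := by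
  obtain ⟨F, X, -, -, -, hF⟩ := exists_isBoundaryModel hpar
    (fun hG : Sweepable G w Set.univ => h.not_ge hG.pathwidth_le) le_rfl
  exact ⟨F, fun j hj => hF.connected j (by lia), hF.pairwiseDisjoint.subset (by grind),
    fun j hj => hF.touches j (by lia)⟩

end Sweep

/-! ### Models of binary trees -/

section BinTree

variable {V : Type*} {G : SimpleGraph V} {B B' D L X Z T : Set V} {n k m w : ℕ}

/-- `BinTreeModel G B n Z X`: the set `X` is partitioned into branch sets of a minor model of the
binary tree of height `n`, where `Z` is the branch set of the root and all branch sets of leaves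
meet `B`. The choice `B = Set.univ` puts no condition on the leaves. -/
inductive BinTreeModel (G : SimpleGraph V) (B : Set V) : ℕ → Set V → Set V → Prop
  | leaf {X : Set V} : SetConnected G X → (X ∩ B).Nonempty → BinTreeModel G B 0 X X
  | node {n : ℕ} {Z Z₀ Z₁ X₀ X₁ : Set V} : SetConnected G Z →
      BinTreeModel G B n Z₀ X₀ → BinTreeModel G B n Z₁ X₁ → Touches G Z Z₀ → Touches G Z Z₁ →
      Disjoint Z X₀ → Disjoint Z X₁ → Disjoint X₀ X₁ → BinTreeModel G B (n + 1) Z (Z ∪ X₀ ∪ X₁)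

/-- A family of branch sets of the binary tree of height `n`, indexed by the vertices of `CTgraph n`
(reversed lists of moves); the values at longer lists are irrelevant. -/
structure IsBinTreeFamily (G : SimpleGraph V) (n : ℕ) (f : List Bool → Set V) : Prop where
  connected : ∀ σ, σ.length ≤ n → SetConnected G (f σ)
  pairwiseDisjoint : {σ | σ.length ≤ n}.PairwiseDisjoint f
  touches : ∀ b σ, σ.length < n → Touches G (f σ) (f (b :: σ))

/-- The family on reversed lists whose value at the root is `Z` and whose restriction to the
subtree at the child `b` of the root is `f b`. -/
def graft (Z : Set V) (f : Bool → List Bool → Set V) (σ : List Bool) : Set V :=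
  match σ.getLast? with
  | none => Z
  | some b => f b σ.dropLast

@[simp]
theorem graft_nil (Z : Set V) (f : Bool → List Bool → Set V) : graft Z f [] = Z :=
  rfl

@[simp]
theorem graft_concat (Z : Set V) (f : Bool → List Bool → Set V) (σ : List Bool) (b : Bool) :
    graft Z f (σ ++ [b]) = f b σ := by
  simp [graft]

namespace BinTreeModel

theorem root_subset (h : BinTreeModel G B n Z X) : Z ⊆ X := by
  cases h <;> grind

theorem connected (h : BinTreeModel G B n Z X) : SetConnected G X := by
  induction h with
  | leaf hX _ => exact hX
  | node hZ h₀ h₁ t₀ t₁ _ _ _ ih₀ ih₁ =>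
    exact (hZ.union_of_touches ih₀ (t₀.mono subset_rfl h₀.root_subset)).union_of_touches ih₁
      (t₁.mono Set.subset_union_left h₁.root_subset)

theorem mono (h : BinTreeModel G B n Z X) (hB : B ⊆ B') : BinTreeModel G B' n Z X := by
  induction h with
  | leaf hX hXB => exact leaf hX (hXB.mono (Set.inter_subset_inter_right _ hB))
  | node hZ _ _ t₀ t₁ d₀ d₁ d ih₀ ih₁ => exact node hZ ih₀ ih₁ t₀ t₁ d₀ d₁ d

theorem exists_submodel (h : BinTreeModel G B (k + m) Z X) :
    ∃ Z' Y, Y ⊆ X ∧ BinTreeModel G B m Z' Y := by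
  induction k generalizing Z X with
  | zero => exact ⟨Z, X, subset_rfl, by rwa [Nat.zero_add] at h⟩
  | succ k ih =>
    rw [Nat.succ_add] at h
    cases h with
    | node _ h₀ =>
      obtain ⟨Z', Y, hY, h'⟩ := ih h₀
      exact ⟨Z', Y, by grind, h'⟩

theorem union_root (h : BinTreeModel G B n Z X) (hT : SetConnected G T) (hZT : Touches G Z T)
    (hd : Disjoint T X) : BinTreeModel G B n (Z ∪ T) (X ∪ T) := by
  cases h with
  | leaf hX hXB => exact leaf (hX.union_of_touches hT hZT) (hXB.mono (by grind))
  | @node _ _ _ _ X₀ X₁ hZ h₀ h₁ t₀ t₁ _ _ d =>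
    rw [show Z ∪ X₀ ∪ X₁ ∪ T = Z ∪ T ∪ X₀ ∪ X₁ by grind]
    exact node (hZ.union_of_touches hT hZT) h₀ h₁ (t₀.mono (by grind) subset_rfl)
      (t₁.mono (by grind) subset_rfl) (by grind) (by grind) d

theorem exists_insert (h : BinTreeModel G B n Z X) {v x : V} (hv : v ∉ X) (hx : x ∈ X)
    (hvx : G.Adj v x) : ∃ Z', Z ⊆ Z' ∧ BinTreeModel G B n Z' (insert v X) := by
  induction h with
  | leaf hX hXB => exact ⟨_, Set.subset_insert _ _, leaf (hX.insert hx hvx) (hXB.mono (by grind))⟩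
  | @node _ Z Z₀ Z₁ X₀ X₁ hZ h₀ h₁ t₀ t₁ d₀ d₁ d ih₀ ih₁ =>
    rcases hx with (hx | hx) | hx
    · refine ⟨insert v Z, Set.subset_insert _ _, ?_⟩
      rw [show insert v (Z ∪ X₀ ∪ X₁) = insert v Z ∪ X₀ ∪ X₁ by grind]
      exact node (hZ.insert hx hvx) h₀ h₁ (t₀.mono (by grind) subset_rfl)
        (t₁.mono (by grind) subset_rfl) (by grind) (by grind) d
    · obtain ⟨Z', hZ', h'⟩ := ih₀ (by grind) hx
      refine ⟨Z, subset_rfl, ?_⟩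
      rw [show insert v (Z ∪ X₀ ∪ X₁) = Z ∪ insert v X₀ ∪ X₁ by grind]
      exact node hZ h' h₁ (t₀.mono subset_rfl hZ') t₁ (by grind) d₁ (by grind)
    · obtain ⟨Z', hZ', h'⟩ := ih₁ (by grind) hx
      refine ⟨Z, subset_rfl, ?_⟩
      rw [show insert v (Z ∪ X₀ ∪ X₁) = Z ∪ X₀ ∪ insert v X₁ by grind]
      exact node hZ h₀ h' t₀ (t₁.mono subset_rfl hZ') d₀ (by grind) (by grind)

theorem exists_of_subset [Finite V] (h : BinTreeModel G B n Z X) (hXL : X ⊆ L)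
    (hL : SetConnected G L) : ∃ Z', BinTreeModel G B n Z' L := by
  obtain ⟨Y, hXY, ⟨hYL, Z', hY⟩, hmax⟩ :=
    (Set.toFinite {Y | Y ⊆ L ∧ ∃ Z', BinTreeModel G B n Z' Y}).exists_le_maximal
      (a := X) ⟨hXL, Z, h⟩
  suffices hLY : L ⊆ Y from ⟨Z', hYL.antisymm hLY ▸ hY⟩
  refine hL.subset_of_not_touches (h.connected.nonempty.mono (by grind)) ?_
  rintro ⟨x, hx, v, hv, hxv⟩
  obtain ⟨Z'', -, h''⟩ := hY.exists_insert hv.2 hx.2 hxv.symm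
  exact hv.2 (hmax ⟨Set.insert_subset hv.1 hYL, Z'', h''⟩ (Set.subset_insert _ _)
    (Set.mem_insert _ _))

theorem of_le [Finite V] (h : BinTreeModel G B n Z X) (hmn : m ≤ n) :
    ∃ Z', BinTreeModel G B m Z' X := by
  obtain ⟨j, rfl⟩ := Nat.exists_eq_add_of_le' hmn
  obtain ⟨Z', Y, hYX, hY⟩ := h.exists_submodel
  exact hY.exists_of_subset hYX h.connected

theorem exists_subtree_avoiding (h : BinTreeModel G B (n + 1) Z X) (c : V) :
    ∃ L, L ⊆ X \ Z ∧ c ∉ L ∧ SetConnected G (X \ L) ∧ ∃ Z', BinTreeModel G B n Z' L := by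
  cases h with
  | @node _ _ Z₀ Z₁ X₀ X₁ hZ h₀ h₁ t₀ t₁ _ _ _ =>
    by_cases hc : c ∈ X₀
    · refine ⟨X₁, by grind, by grind, ?_, Z₁, h₁⟩
      rw [show (Z ∪ X₀ ∪ X₁) \ X₁ = Z ∪ X₀ by grind]
      exact hZ.union_of_touches h₀.connected (t₀.mono subset_rfl h₀.root_subset)
    · refine ⟨X₀, by grind, hc, ?_, Z₀, h₀⟩
      rw [show (Z ∪ X₀ ∪ X₁) \ X₀ = Z ∪ X₁ by grind]
      exact hZ.union_of_touches h₁.connected (t₁.mono subset_rfl h₁.root_subset)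

theorem exists_two_subtrees_avoiding (h : BinTreeModel G B (n + 2) Z X) (c : V) :
    ∃ L L', L ⊆ X ∧ L' ⊆ X ∧ Disjoint L L' ∧ c ∉ L ∧ c ∉ L' ∧
      SetConnected G (X \ L) ∧ SetConnected G (X \ L') ∧
      (∃ Z', BinTreeModel G B n Z' L) ∧ ∃ Z', BinTreeModel G B n Z' L' := by
  cases h with
  | @node _ _ Z₀ Z₁ X₀ X₁ hZ h₀ h₁ t₀ t₁ _ _ _ =>
    obtain ⟨L, hL, hcL, hLc, hLm⟩ := h₀.exists_subtree_avoiding c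
    obtain ⟨L', hL', hcL', hLc', hLm'⟩ := h₁.exists_subtree_avoiding c
    have := h₀.root_subset
    have := h₁.root_subset
    refine ⟨L, L', by grind, by grind, by grind, hcL, hcL', ?_, ?_, hLm, hLm'⟩
    · rw [show (Z ∪ X₀ ∪ X₁) \ L = Z ∪ (X₀ \ L) ∪ X₁ by grind]
      exact (hZ.union_of_touches hLc (t₀.mono subset_rfl (by grind))).union_of_touches
        h₁.connected (t₁.mono (by grind) h₁.root_subset)
    · rw [show (Z ∪ X₀ ∪ X₁) \ L' = Z ∪ X₀ ∪ (X₁ \ L') by grind]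
      exact (hZ.union_of_touches h₀.connected (t₀.mono subset_rfl h₀.root_subset)).union_of_touches
        hLc' (t₁.mono (by grind) (by grind))

end BinTreeModel

namespace IsBinTreeFamily

variable {f : List Bool → Set V}

theorem subtree (hf : IsBinTreeFamily G (n + 1) f) (b : Bool) :
    IsBinTreeFamily G n fun σ => f (σ ++ [b]) where
  connected σ hσ := hf.connected _ (by simpa using hσ)
  pairwiseDisjoint σ hσ τ hτ hne :=
    hf.pairwiseDisjoint (by simpa using hσ) (by simpa using hτ) (by simpa using hne)
  touches c σ hσ := hf.touches c (σ ++ [b]) (by simpa using hσ)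

theorem graft {g : Bool → List Bool → Set V}
    (hZ : SetConnected G Z) (hg : ∀ b, IsBinTreeFamily G n (g b))
    (ht : ∀ b, Touches G Z (g b []))
    (hd : ∀ b σ, σ.length ≤ n → Disjoint Z (g b σ))
    (hd' : ∀ b c σ τ, b ≠ c → σ.length ≤ n → τ.length ≤ n → Disjoint (g b σ) (g c τ)) :
    IsBinTreeFamily G (n + 1) (graft Z g) where
  connected σ hσ := by
    rcases σ.eq_nil_or_concat' with rfl | ⟨σ, b, rfl⟩
    · simpa using hZ
    · simpa using (hg b).connected σ (by simpa using hσ)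
  pairwiseDisjoint σ hσ τ hτ hne := by
    rcases σ.eq_nil_or_concat' with rfl | ⟨σ, b, rfl⟩ <;>
      rcases τ.eq_nil_or_concat' with rfl | ⟨τ, c, rfl⟩
    · exact absurd rfl hne
    · simpa [Function.onFun] using hd c τ (by simpa using hτ)
    · simpa [Function.onFun] using (hd b σ (by simpa using hσ)).symm
    · rcases eq_or_ne b c with rfl | hbc
      · simpa [Function.onFun] using (hg b).pairwiseDisjoint (by simpa using hσ)
          (by simpa using hτ) (by simpa using hne)
      · simpa [Function.onFun] using hd' b c σ τ hbc (by simpa using hσ) (by simpa using hτ)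
  touches c σ hσ := by
    rcases σ.eq_nil_or_concat' with rfl | ⟨σ, b, rfl⟩
    · simpa using graft_concat Z g [] c ▸ ht c
    · rw [← List.cons_append, graft_concat, graft_concat]
      exact (hg b).touches c σ (by simpa using hσ)

theorem exists_model (hf : IsBinTreeFamily G n f) :
    ∃ X, X ⊆ ⋃ σ ∈ {σ : List Bool | σ.length ≤ n}, f σ ∧ BinTreeModel G Set.univ n (f []) X := by
  induction n generalizing f with
  | zero =>
    have h₀ := hf.connected [] le_rfl
    exact ⟨f [], Set.subset_biUnion_of_mem (u := f) (by simp),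
      .leaf h₀ (by simpa using h₀.nonempty)⟩
  | succ n ih =>
    obtain ⟨X₀, hX₀, h₀⟩ := ih (hf.subtree false)
    obtain ⟨X₁, hX₁, h₁⟩ := ih (hf.subtree true)
    have mem (b : Bool) {X : Set V}
        (hX : X ⊆ ⋃ σ ∈ {σ : List Bool | σ.length ≤ n}, f (σ ++ [b])) {x : V} (hx : x ∈ X) :
        ∃ σ : List Bool, σ.length ≤ n ∧ x ∈ f (σ ++ [b]) := by
      simpa using hX hx
    have eq_of_mem {σ τ : List Bool} (hσ : σ.length ≤ n + 1) (hτ : τ.length ≤ n + 1) {x : V}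
        (hxσ : x ∈ f σ) (hxτ : x ∈ f τ) : σ = τ := by
      by_contra hne
      exact Set.disjoint_left.1 (hf.pairwiseDisjoint hσ hτ hne) hxσ hxτ
    have disj (b : Bool) {X : Set V}
        (hX : X ⊆ ⋃ σ ∈ {σ : List Bool | σ.length ≤ n}, f (σ ++ [b])) : Disjoint (f []) X := by
      refine Set.disjoint_left.2 fun x hx hxX => ?_
      obtain ⟨σ, hσ, hxσ⟩ := mem b hX hxX
      simpa using eq_of_mem (by simp) (by simpa using hσ) hx hxσ
    refine ⟨f [] ∪ X₀ ∪ X₁, ?_, .node (hf.connected [] (by simp)) h₀ h₁ (hf.touches _ _ (by simp))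
      (hf.touches _ _ (by simp)) (disj _ hX₀) (disj _ hX₁) ?_⟩
    · rintro x ((hx | hx) | hx)
      · exact Set.mem_biUnion (by simp) hx
      · obtain ⟨σ, hσ, hxσ⟩ := mem _ hX₀ hx
        exact Set.mem_biUnion (by simpa using hσ) hxσ
      · obtain ⟨σ, hσ, hxσ⟩ := mem _ hX₁ hx
        exact Set.mem_biUnion (by simpa using hσ) hxσ
    · refine Set.disjoint_left.2 fun x hx₀ hx₁ => ?_
      obtain ⟨σ, hσ, hxσ⟩ := mem _ hX₀ hx₀
      obtain ⟨τ, hτ, hxτ⟩ := mem _ hX₁ hx₁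
      simpa using eq_of_mem (by simpa using hσ) (by simpa using hτ) hxσ hxτ

end IsBinTreeFamily

theorem BinTreeModel.exists_family (h : BinTreeModel G B n Z X) :
    ∃ f, IsBinTreeFamily G n f ∧ f [] = Z ∧ (∀ σ, σ.length ≤ n → f σ ⊆ X) ∧
      ∀ σ, σ.length = n → (f σ ∩ B).Nonempty := by
  induction h with
  | @leaf X hX hXB =>
    refine ⟨fun _ => X, ⟨fun _ _ => hX, ?_, by simp⟩, rfl, fun _ _ => subset_rfl, fun _ _ => hXB⟩
    simp
  | @node n Z Z₀ Z₁ X₀ X₁ hZ _ _ t₀ t₁ d₀ d₁ d ih₀ ih₁ =>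
    obtain ⟨f₀, hf₀, rfl, hX₀, hB₀⟩ := ih₀
    obtain ⟨f₁, hf₁, rfl, hX₁, hB₁⟩ := ih₁
    refine ⟨graft Z fun b => cond b f₁ f₀, .graft hZ ?_ ?_ ?_ ?_, rfl, ?_, ?_⟩
    · simp [hf₀, hf₁]
    · simp [t₀, t₁]
    · rintro (_ | _) σ hσ
      · exact d₀.mono_right (hX₀ σ hσ)
      · exact d₁.mono_right (hX₁ σ hσ)
    · rintro (_ | _) (_ | _) σ τ hne hσ hτ
      · exact absurd rfl hne
      · exact d.mono (hX₀ σ hσ) (hX₁ τ hτ)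
      · exact (d.mono (hX₀ τ hτ) (hX₁ σ hσ)).symm
      · exact absurd rfl hne
    · intro σ hσ
      rcases σ.eq_nil_or_concat' with rfl | ⟨σ, _ | _, rfl⟩
      · grind [graft_nil]
      · grind [graft_concat]
      · grind [graft_concat]
    · intro σ hσ
      rcases σ.eq_nil_or_concat' with rfl | ⟨σ, _ | _, rfl⟩
      · simp at hσ
      · simpa using hB₀ σ (by simpa using hσ)
      · simpa using hB₁ σ (by simpa using hσ)

theorem BinTreeModel.isMinor_Pgraph (h : BinTreeModel G {v | ∃ d ∈ D, G.Adj v d} k Z X)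
    (hD : SetConnected G D) (hDX : Disjoint D X) : IsMinor (Pgraph k) G := by
  obtain ⟨f, hf, -, hfX, hfB⟩ := h.exists_family
  let F : Option (CTVert k) → Set V := fun o => o.elim D fun σ => f σ.1
  have hF : ∀ w, SetConnected G (F w) := by
    rintro (_ | σ)
    exacts [hD, hf.connected _ σ.2]
  refine ⟨F, fun w => (hF w).nonempty, hF, ?_, fun w₁ w₂ hadj => ?_⟩
  · rintro (_ | σ) (_ | τ) hne
    · exact absurd rfl hne
    · exact hDX.mono_right (hfX _ τ.2)
    · exact (hDX.mono_right (hfX _ σ.2)).symm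
    · exact hf.pairwiseDisjoint σ.2 τ.2 fun hστ => hne (congrArg some (Subtype.ext hστ))
  · change Touches G (F w₁) (F w₂)
    rw [Pgraph, SimpleGraph.fromEdgeSet_adj] at hadj
    rcases hadj.1 with ⟨b, σ, hσ, he⟩ | ⟨l, hl, he⟩
    · have key := hf.touches b σ hσ
      rcases Sym2.eq_iff.1 he with ⟨rfl, rfl⟩ | ⟨rfl, rfl⟩
      exacts [key, key.symm]
    · have key : Touches G D (f l.1) := by
        obtain ⟨v, hv, d, hd, hvd⟩ := hfB l.1 hl
        exact ⟨d, hd, v, hv, hvd.symm⟩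
      rcases Sym2.eq_iff.1 he with ⟨rfl, rfl⟩ | ⟨rfl, rfl⟩
      exacts [key, key.symm]

/-- The breadth-first numbering of the vertices of the infinite binary tree. -/
def binTreeIndex : List Bool → ℕ
  | [] => 0
  | b :: σ => 2 * binTreeIndex σ + 1 + b.toNat

theorem binTreeIndex_injective : Function.Injective binTreeIndex := by
  intro σ
  induction σ with
  | nil => rintro (_ | ⟨b, τ⟩) h <;> grind [binTreeIndex]
  | cons b σ ih =>
    rintro (_ | ⟨c, τ⟩) h
    · grind [binTreeIndex]
    · have hστ : binTreeIndex σ = binTreeIndex τ := by cases b <;> cases c <;> grind [binTreeIndex]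
      obtain rfl := ih hστ
      cases b <;> cases c <;> simp_all [binTreeIndex]

theorem binTreeIndex_add_two_le (σ : List Bool) : binTreeIndex σ + 2 ≤ 2 ^ (σ.length + 1) := by
  induction σ with
  | nil => simp [binTreeIndex]
  | cons b σ ih => cases b <;> simp only [binTreeIndex, List.length_cons, pow_succ] at * <;> grind

theorem exists_binTreeModel [Fintype V] (h : 2 ^ (n + 1) ≤ pathwidth G) :
    ∃ Z X, BinTreeModel G Set.univ n Z X := by
  obtain ⟨F, hF, hd, ht⟩ := exists_disjoint_connected_family (par := fun j => (j - 1) / 2)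
    (w := 2 ^ (n + 1) - 1) (fun j hj => by omega) (lt_of_lt_of_le (by simp) h)
  have index_le {σ : List Bool} (hσ : σ.length ≤ n) : binTreeIndex σ ≤ 2 ^ (n + 1) - 1 := by
    have := binTreeIndex_add_two_le σ
    have := Nat.pow_le_pow_right (n := 2) (by simp) (Nat.add_le_add_right hσ 1)
    omega
  have hf : IsBinTreeFamily G n fun σ => F (binTreeIndex σ) := by
    refine ⟨fun σ hσ => hF _ (index_le hσ), fun σ hσ τ hτ hne => hd (index_le hσ) (index_le hτ)
      (binTreeIndex_injective.ne hne), fun b σ hσ => ?_⟩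
    have hpar : (binTreeIndex (b :: σ) - 1) / 2 = binTreeIndex σ := by
      cases b <;> simp only [binTreeIndex, Bool.toNat_false, Bool.toNat_true] <;> omega
    have := ht _ (index_le (σ := b :: σ) hσ) (by simp [binTreeIndex])
    exact (hpar ▸ this).symm
  obtain ⟨X, -, hX⟩ := hf.exists_model
  exact ⟨_, X, hX⟩

/-- In the connected set `L` there is a model of the binary tree of height `m` that can be
separated from `B` and `Z`, since both are joined up within the connected remainder `R`. -/
def HasFreeSubmodel (G : SimpleGraph V) (B : Set V) (m : ℕ) (Z L : Set V) : Prop :=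
  ∃ Y R, (∃ Z', BinTreeModel G Set.univ m Z' Y) ∧ Y ⊆ L ∧ SetConnected G R ∧ R ⊆ L \ Y ∧
    Z ⊆ R ∧ L ∩ B ⊆ R

theorem BinTreeModel.hasFreeSubmodel_union {S Z₀ X₀ : Set V}
    (h : BinTreeModel G Set.univ (k + m) Z₀ X₀) (hXB : Disjoint X₀ B) (hS : SetConnected G S)
    (hSX : Disjoint S X₀) (hZS : Z ⊆ S) : HasFreeSubmodel G B m Z (S ∪ X₀) := by
  obtain ⟨Z', Y, hYX, hY⟩ := h.exists_submodel
  exact ⟨Y, S, ⟨Z', hY⟩, by grind, hS, by grind, hZS, by grind⟩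

theorem HasFreeSubmodel.union {S Z₀ X₀ : Set V} (h : HasFreeSubmodel G B m Z₀ X₀)
    (hS : SetConnected G S) (hSZ : Touches G S Z₀) (hSX : Disjoint S X₀) (hZS : Z ⊆ S) :
    HasFreeSubmodel G B m Z (S ∪ X₀) := by
  obtain ⟨Y, R, hY, hYX, hR, hRX, hZR, hBR⟩ := h
  exact ⟨Y, S ∪ R, hY, by grind, hS.union_of_touches hR (hSZ.mono subset_rfl hZR), by grind,
    by grind, by grind⟩

theorem BinTreeModel.disjoint_or_exists_or_hasFreeSubmodel
    (h : BinTreeModel G Set.univ (k + m) Z L) :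
    Disjoint L B ∨ (∃ Z', Z ⊆ Z' ∧ BinTreeModel G B k Z' L) ∨ HasFreeSubmodel G B m Z L := by
  induction k generalizing Z L with
  | zero =>
    by_cases hB : Disjoint L B
    · exact .inl hB
    · exact .inr <| .inl
        ⟨L, h.root_subset, .leaf h.connected (Set.not_disjoint_iff_nonempty_inter.1 hB)⟩
  | succ k ih =>
    rw [Nat.succ_add] at h
    cases h with
    | @node _ _ Z₀ Z₁ X₀ X₁ hZ h₀ h₁ t₀ t₁ d₀ d₁ d =>
      have hS₀ : SetConnected G (Z ∪ X₀) :=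
        hZ.union_of_touches h₀.connected (t₀.mono subset_rfl h₀.root_subset)
      have hS₁ : SetConnected G (Z ∪ X₁) :=
        hZ.union_of_touches h₁.connected (t₁.mono subset_rfl h₁.root_subset)
      have swap : Z ∪ X₀ ∪ X₁ = Z ∪ X₁ ∪ X₀ := by grind
      rcases ih h₀ with hB₀ | ⟨Z₀', hZ₀, h₀'⟩ | hfree₀
      · exact .inr <| .inr <| swap ▸ h₀.hasFreeSubmodel_union hB₀ hS₁ (by grind) (by grind)
      · rcases ih h₁ with hB₁ | ⟨Z₁', hZ₁, h₁'⟩ | hfree₁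
        · exact .inr <| .inr <| h₁.hasFreeSubmodel_union hB₁ hS₀ (by grind) (by grind)
        · exact .inr <| .inl ⟨Z, subset_rfl, .node hZ h₀' h₁' (t₀.mono subset_rfl hZ₀)
            (t₁.mono subset_rfl hZ₁) d₀ d₁ d⟩
        · exact .inr <| .inr <|
            hfree₁.union hS₀ (t₁.mono (by grind) subset_rfl) (by grind) (by grind)
      · exact .inr <| .inr <| swap ▸
          hfree₀.union hS₁ (t₀.mono (by grind) subset_rfl) (by grind) (by grind)

end BinTree

/-! ### Based regions -/

section Region

variable {V : Type*} {G : SimpleGraph V} {A B C D K L P R R' S S' T T' U X Y Z : Set V}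
  {k m n : ℕ}

/-- `C` carries a model of the binary tree of height `n`, and the two connected sets `S`, `T` play
the role of the ends of a base edge for it: after contracting `S` and `T` to single vertices, no
vertex of `C` separates `S ∪ T ∪ C`. -/
structure BasedRegion (G : SimpleGraph V) (n : ℕ) (S T C : Set V) : Prop where
  connected_left : SetConnected G S
  connected_right : SetConnected G T
  disjoint : Disjoint S T
  disjoint_left : Disjoint S C
  disjoint_right : Disjoint T C
  touches : Touches G S T
  touches_left : Touches G S C
  touches_right : Touches G T C
  connected_diff_singleton : ∀ c ∈ C, SetConnected G ((S ∪ T ∪ C) \ {c})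
  exists_model : ∃ Z, BinTreeModel G Set.univ n Z C

/-- A based region inside `U` whose part `K` is shielded from the rest `U \ (R ∪ R' ∪ K)` of `U`:
only `R` and `R'` have neighbours there. -/
structure ShieldedRegion (G : SimpleGraph V) (n : ℕ) (U R R' K : Set V) : Prop
    extends BasedRegion G n R R' K where
  subset : R ∪ R' ∪ K ⊆ U
  connected_diff : SetConnected G (U \ (R ∪ R' ∪ K))
  touches_diff_left : Touches G R (U \ (R ∪ R' ∪ K))
  touches_diff_right : Touches G R' (U \ (R ∪ R' ∪ K))
  not_touches_diff : ¬ Touches G K (U \ (R ∪ R' ∪ K))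

namespace BasedRegion

theorem symm (h : BasedRegion G n S T C) : BasedRegion G n T S C where
  connected_left := h.connected_right
  connected_right := h.connected_left
  disjoint := h.disjoint.symm
  disjoint_left := h.disjoint_right
  disjoint_right := h.disjoint_left
  touches := h.touches.symm
  touches_left := h.touches_right
  touches_right := h.touches_left
  connected_diff_singleton := Set.union_comm T S ▸ h.connected_diff_singleton
  exists_model := h.exists_model

theorem connected_base (h : BasedRegion G n S T C) : SetConnected G (S ∪ T) :=
  h.connected_left.union_of_touches h.connected_right h.touches

theorem connected (h : BasedRegion G n S T C) : SetConnected G C :=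
  h.exists_model.elim fun _ hZ => hZ.connected

theorem connected_union (h : BasedRegion G n S T C) : SetConnected G (S ∪ T ∪ C) :=
  h.connected_base.union_of_touches h.connected (h.touches_left.mono (by grind) subset_rfl)

theorem connected_diff_left (h : BasedRegion G n S T C) : SetConnected G ((S ∪ T ∪ C) \ S) := by
  have := h.disjoint
  have := h.disjoint_left
  rw [show (S ∪ T ∪ C) \ S = T ∪ C by grind]
  exact h.connected_right.union_of_touches h.connected h.touches_right

theorem connected_diff_subsingleton (h : BasedRegion G n S T C) (hX : X.Subsingleton)
    (hXC : X ⊆ C) : SetConnected G ((S ∪ T ∪ C) \ X) := by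
  rcases hX.eq_empty_or_singleton with rfl | ⟨c, rfl⟩
  · simpa using h.connected_union
  · exact h.connected_diff_singleton c (hXC rfl)

theorem of_le [Finite V] (h : BasedRegion G n S T C) (hmn : m ≤ n) : BasedRegion G m S T C :=
  { h with exists_model := h.exists_model.elim fun _ hZ => hZ.of_le hmn }

theorem enlarge (h : BasedRegion G n S T C) (hS : SetConnected G S') (hT : SetConnected G T')
    (hSS : S ⊆ S') (hTT : T ⊆ T') (hST : Disjoint S' T') (hSC : Disjoint S' C)
    (hTC : Disjoint T' C) : BasedRegion G n S' T' C where
  connected_left := hS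
  connected_right := hT
  disjoint := hST
  disjoint_left := hSC
  disjoint_right := hTC
  touches := h.touches.mono hSS hTT
  touches_left := h.touches_left.mono hSS subset_rfl
  touches_right := h.touches_right.mono hTT subset_rfl
  exists_model := h.exists_model
  connected_diff_singleton c hc := by
    rw [show (S' ∪ T' ∪ C) \ {c} = S' ∪ (T' ∪ (S ∪ T ∪ C) \ {c}) by grind]
    obtain ⟨s, hs⟩ := h.connected_left.nonempty
    obtain ⟨t, ht⟩ := h.connected_right.nonempty
    exact hS.union (hT.union (h.connected_diff_singleton c hc) ⟨t, by grind⟩) ⟨s, by grind⟩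

end BasedRegion

theorem Linked.exists_connected_bipartition (h : Linked (G.induce U).spanningCoe 2 A B)
    (hU : SetConnected G U) (hA : A ⊆ U) :
    ∃ P ⊆ U, SetConnected G P ∧ SetConnected G (U \ P) ∧ (P ∩ A).Nonempty ∧ (P ∩ B).Nonempty ∧
      ((U \ P) ∩ A).Nonempty ∧ ((U \ P) ∩ B).Nonempty := by
  obtain ⟨f, hd, hf⟩ := h
  have hfU (i) : f i ⊆ U :=
    (hf i).1.subset_of_spanningCoe ((hf i).2.1.mono (Set.inter_subset_inter_right _ hA))
  have hfG (i) : SetConnected G (f i) := (hf i).1.mono (G.spanningCoe_induce_le U)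
  obtain ⟨P, h0P, hPU, hP, hUP, -⟩ := hU.exists_connected_bipartition (hfG 0) (hfG 1) (hfU 0)
    (hfU 1) (hd (by decide))
  have h1P : f 1 ⊆ U \ P := by grind
  exact ⟨P, by grind, hP, hUP, (hf 0).2.1.mono (by grind), (hf 0).2.2.mono (by grind),
    (hf 1).2.1.mono (by grind), (hf 1).2.2.mono (by grind)⟩

theorem exists_subset_not_touches [Finite V] (hG : ¬ IsMinor (Pgraph k) G)
    (hL : BinTreeModel G Set.univ (k + m) Z L) (hD : SetConnected G D) (hDL : Disjoint D L)
    (ht : Touches G L D) :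
    ∃ K ⊆ L, (∃ Z', BinTreeModel G Set.univ m Z' K) ∧ SetConnected G (L \ K) ∧
      ¬ Touches G K D := by
  rcases hL.disjoint_or_exists_or_hasFreeSubmodel (B := {v | ∃ d ∈ D, G.Adj v d})
    with hLB | ⟨Z', -, hZ'⟩ | ⟨Y, R, ⟨Z', hY⟩, hYL, hR, hRL, -, hBR⟩
  · obtain ⟨x, hx, d, hd, hxd⟩ := ht
    exact absurd ⟨d, hd, hxd⟩ (Set.disjoint_left.1 hLB hx)
  · exact absurd (hZ'.isMinor_Pgraph hD hDL) hG
  · obtain ⟨K, hYK, hKL, hK, hKcl⟩ := hY.connected.exists_component (X := L \ R) (by grind)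
    refine ⟨K, by grind, hY.exists_of_subset hYK hK, hL.connected.diff hR (by grind) (by grind) ?_,
      ?_⟩
    · rwa [Set.sdiff_sdiff, Set.union_comm] at hKcl
    · rintro ⟨x, hx, d, hd, hxd⟩
      exact (hKL hx).2 (hBR ⟨(hKL hx).1, d, hd, hxd⟩)

theorem BasedRegion.linked_of_not_touches [Finite V] (h : BasedRegion G n S T C) (hLC : L ⊆ C)
    (hKL : K ⊆ L) (hK : K.Nonempty) (hKD : ¬ Touches G K (S ∪ T ∪ C \ L)) :
    Linked (G.induce (L \ K)).spanningCoe 2 {v | v ∈ L \ K ∧ ∃ x ∈ K, G.Adj v x}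
      {v | v ∈ L \ K ∧ ∃ d ∈ S ∪ T ∪ C \ L, G.Adj v d} := by
  have hSC := h.disjoint_left
  obtain ⟨s, hs⟩ := h.connected_left.nonempty
  obtain ⟨z, hz⟩ := hK
  refine linked_of_forall_isSeparation _ _ _ _ fun P Q hPQ => ?_
  by_contra! hlt
  have hsub : (P ∩ Q ∩ (L \ K)).Subsingleton :=
    ((Set.ncard_le_one_iff_subsingleton).1 (by omega)).anti Set.inter_subset_left
  have hW := h.connected_diff_subsingleton hsub (by grind)
  obtain ⟨x, ⟨-, hx⟩, y, ⟨hyW, hy⟩, hxy⟩ := hW.touches_diff (P := K ∪ (P \ Q) ∩ (L \ K))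
    ⟨z, by grind⟩ ⟨s, by grind⟩
  have hyPQ := hPQ.mem_or_mem y
  by_cases hyD : y ∈ S ∪ T ∪ C \ L
  · rcases hx with hx | hx
    · exact hKD ⟨x, hx, y, hyD, hxy⟩
    · exact hx.1.2 (hPQ.right_subset ⟨hx.2, y, hyD, hxy⟩)
  · have hyL : y ∈ L \ K := by grind
    rcases hx with hx | hx
    · have := hPQ.left_subset (a := y) ⟨hyL, x, hx, hxy.symm⟩
      grind
    · exact hPQ.not_touches ⟨x, hx.1, y, by grind, hxy.ne, ⟨x, hx.2⟩, ⟨y, hyL⟩, hxy, rfl, rfl⟩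

theorem BasedRegion.of_not_touches (h : BasedRegion G n S T C) (hLC : R ∪ R' ∪ K ⊆ C)
    (hR : SetConnected G R) (hR' : SetConnected G R') (hd : Disjoint R R')
    (hRK : Disjoint R K) (hRK' : Disjoint R' K) (ht : Touches G R R') (htK : Touches G R K)
    (htK' : Touches G R' K) (hZ : ∃ Z, BinTreeModel G Set.univ m Z K)
    (hKD : ¬ Touches G K (S ∪ T ∪ C \ (R ∪ R' ∪ K))) : BasedRegion G m R R' K where
  connected_left := hR
  connected_right := hR'
  disjoint := hd
  disjoint_left := hRK
  disjoint_right := hRK'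
  touches := ht
  touches_left := htK
  touches_right := htK'
  exists_model := hZ
  connected_diff_singleton c hc := by
    have := h.disjoint_left
    have := h.disjoint_right
    rw [show (R ∪ R' ∪ K) \ {c} =
      ((S ∪ T ∪ C) \ {c}) \ (S ∪ T ∪ C \ (R ∪ R' ∪ K)) by grind]
    refine (h.connected_diff_singleton c (by grind)).diff (hR.union_of_touches hR' ht) (by grind)
      (by grind) fun ht => hKD (ht.symm.mono (by grind) subset_rfl)

theorem BasedRegion.exists_shieldedRegion [Finite V] (h : BasedRegion G n S T C)
    (hG : ¬ IsMinor (Pgraph k) G) (hLC : L ⊆ C) (hL : BinTreeModel G Set.univ (k + m) Z L)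
    (hCL : SetConnected G (C \ L)) (ht : Touches G (S ∪ T) (C \ L)) :
    ∃ R R' K, ShieldedRegion G m (S ∪ T ∪ C) R R' K ∧ L = R ∪ R' ∪ K := by
  have := h.disjoint_left
  have := h.disjoint_right
  have hD : SetConnected G (S ∪ T ∪ C \ L) := h.connected_base.union_of_touches hCL ht
  have hDL : Disjoint (S ∪ T ∪ C \ L) L := by grind
  have htL : Touches G L (C \ L) :=
    SetConnected.touches (by rw [Set.union_sdiff_cancel hLC]; exact h.connected)
      hL.connected.nonempty hCL.nonempty Set.disjoint_sdiff_right
  obtain ⟨K, hKL, ⟨Z', hK⟩, hLK, hKD⟩ :=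
    exists_subset_not_touches hG hL hD hDL (htL.mono subset_rfl Set.subset_union_right)
  obtain ⟨R, hRL, hR, hR', ⟨r, hr, -, x, hx, hrx⟩, ⟨r₁, hr₁, -, d, hd, hrd⟩,
    ⟨r', hr', -, x', hx', hrx'⟩, ⟨r₁', hr₁', -, d', hd', hrd'⟩⟩ :=
    (h.linked_of_not_touches hLC hKL hK.connected.nonempty hKD).exists_connected_bipartition hLK
      fun v hv => hv.1
  have hLeq : L = R ∪ (L \ K) \ R ∪ K := by grind
  have hRR' : Touches G R ((L \ K) \ R) :=
    SetConnected.touches (by rwa [Set.union_sdiff_cancel hRL]) hR.nonempty hR'.nonempty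
      Set.disjoint_sdiff_right
  have hRegion : BasedRegion G m R ((L \ K) \ R) K :=
    h.of_not_touches (hLeq ▸ hLC) hR hR' Set.disjoint_sdiff_right (by grind) (by grind) hRR'
      ⟨r, hr, x, hx, hrx⟩ ⟨r', hr', x', hx', hrx'⟩ ⟨Z', hK⟩ (by rwa [← hLeq])
  have hDeq : S ∪ T ∪ C \ L = (S ∪ T ∪ C) \ (R ∪ (L \ K) \ R ∪ K) := by grind
  rw [hDeq] at hD hd hd' hKD
  exact ⟨R, (L \ K) \ R, K, ⟨hRegion, by grind, hD, ⟨r₁, hr₁, d, hd, hrd⟩,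
    ⟨r₁', hr₁', d', hd', hrd'⟩, hKD⟩, hLeq⟩

end Region

/-! ### Bonds -/

section Bond

variable {V : Type*} {G : SimpleGraph V} {M M' P S T U X Y : Set V}
  {𝓕 𝓟 : Set (Set V)}

/-- The graph on vertex sets in which two sets are adjacent if an edge of `G` joins them. Its
restriction to a partition of `U` is the quotient of `G.induce U` by that partition. -/
def blobGraph (G : SimpleGraph V) : SimpleGraph (Set V) where
  Adj A B := A ≠ B ∧ Touches G A B
  symm := ⟨fun _ _ h => ⟨h.1.symm, h.2.symm⟩⟩
  loopless := ⟨fun _ h => h.1 rfl⟩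

/-- Both sides of the edge cut of `U` determined by `P` are connected, that is, this cut is a bond
of the subgraph induced by `U`. -/
structure IsBond (G : SimpleGraph V) (U P : Set V) : Prop where
  subset : P ⊆ U
  connected : SetConnected G P
  connected_diff : SetConnected G (U \ P)

/-- One of `M`, `M'` lies in `X` and the other one in `Y`. -/
def Opposite (M M' X Y : Set V) : Prop :=
  (M ⊆ X ∧ M' ⊆ Y) ∨ (M' ⊆ X ∧ M ⊆ Y)

theorem Opposite.symm (h : Opposite M M' X Y) : Opposite M M' Y X :=
  (Or.symm h).imp And.symm And.symm

theorem IsBond.diff (h : IsBond G U P) : IsBond G U (U \ P) where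
  subset := Set.sdiff_subset
  connected := h.connected_diff
  connected_diff := by rw [Set.sdiff_sdiff_cancel_left h.subset]; exact h.connected

namespace SetConnected

theorem sUnion (h𝓕 : SetConnected (blobGraph G) 𝓕) (h : ∀ B ∈ 𝓕, SetConnected G B) :
    SetConnected G (⋃₀ 𝓕) := by
  obtain ⟨B₀, hB₀⟩ := h𝓕.nonempty
  refine of_forall_touches ((h B₀ hB₀).nonempty.mono (Set.subset_sUnion_of_mem hB₀)) ?_
  rintro P hP ⟨x, hx⟩ ⟨y, ⟨B, hB, hyB⟩, hy⟩
  by_cases hcut : ∃ A ∈ 𝓕, (A ∩ P).Nonempty ∧ (A \ P).Nonempty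
  · obtain ⟨A, hA, hAP, hAP'⟩ := hcut
    exact ((h A hA).touches_diff hAP hAP').mono Set.inter_subset_right
      (Set.sdiff_subset_sdiff_left (Set.subset_sUnion_of_mem hA))
  · have hside (A) (hA : A ∈ 𝓕) : A ⊆ P ∨ Disjoint A P := by
      by_contra! hAP
      exact hcut ⟨A, hA, Set.not_disjoint_iff_nonempty_inter.1 hAP.2, Set.sdiff_nonempty.2 hAP.1⟩
    obtain ⟨A, hA, hxA⟩ := hP hx
    obtain ⟨A₁, hA₁, B₁, hB₁, hAB⟩ := h𝓕.touches_diff (P := {A | A ⊆ P})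
      ⟨A, hA, (hside A hA).resolve_right fun hAP => Set.disjoint_left.1 hAP hxA hx⟩
      ⟨B, hB, fun hBP => hy (hBP hyB)⟩
    exact hAB.2.mono hA₁.2 (Set.subset_sdiff.2 ⟨Set.subset_sUnion_of_mem hB₁.1,
      (hside B₁ hB₁.1).resolve_left hB₁.2⟩)

theorem of_sUnion (h𝓕 : SetConnected G (⋃₀ 𝓕)) (hne : ∀ B ∈ 𝓕, B.Nonempty)
    (hd : 𝓕.PairwiseDisjoint id) : SetConnected (blobGraph G) 𝓕 := by
  refine of_forall_touches (Set.nonempty_sUnion.1 h𝓕.nonempty |>.imp fun _ h => h.1) ?_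
  intro 𝓟 h𝓟 ⟨A, hA⟩ ⟨B, hB⟩
  obtain ⟨x, ⟨A', hA', hx⟩, y, ⟨B', hB', hy⟩, hxy⟩ : Touches G (⋃₀ 𝓟) (⋃₀ (𝓕 \ 𝓟)) := by
    refine touches ?_ ((hne A (h𝓟 hA)).mono (Set.subset_sUnion_of_mem hA))
      ((hne B hB.1).mono (Set.subset_sUnion_of_mem hB)) ?_
    · rwa [← Set.sUnion_union, Set.union_sdiff_cancel h𝓟]
    · exact Set.disjoint_sUnion_left.2 fun A hA => Set.disjoint_sUnion_right.2 fun B hB =>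
        hd (h𝓟 hA) hB.1 fun h => hB.2 (h ▸ hA)
  exact ⟨A', hA', B', hB', fun h => hB'.2 (h ▸ hA'), x, hx, y, hy, hxy⟩

theorem exists_isBond [Finite V] {s t x y : V} (hU : SetConnected G U)
    (h : ∀ c ∈ U, SetConnected G (U \ {c})) (hs : s ∈ U) (ht : t ∈ U) (hx : x ∈ U) (hy : y ∈ U)
    (hst : s ≠ t) (hxy : x ≠ y) :
    ∃ P, IsBond G U P ∧ s ∈ P ∧ t ∉ P ∧ (x ∈ P ∧ y ∉ P ∨ y ∈ P ∧ x ∉ P) := by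
  have hlink : Linked (G.induce U).spanningCoe 2 {s, t} {x, y} := by
    refine linked_of_forall_isSeparation _ _ _ _ fun P Q hPQ => ?_
    by_contra! hlt
    have hsub : (P ∩ Q ∩ U).Subsingleton :=
      ((Set.ncard_le_one_iff_subsingleton).1 (by omega)).anti Set.inter_subset_left
    have hW : SetConnected G (U \ (P ∩ Q ∩ U)) := by
      rcases hsub.eq_empty_or_singleton with he | ⟨c, hc⟩
      · simpa [he] using hU
      · rw [hc]
        exact h c (hc.ge rfl).2
    have hstP := hPQ.left_subset
    have hxyQ := hPQ.right_subset
    have hnotst : ¬ (s ∈ Q ∧ t ∈ Q) := fun hQ => hst (hsub (by grind) (by grind))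
    have hnotxy : ¬ (x ∈ P ∧ y ∈ P) := fun hP => hxy (hsub (by grind) (by grind))
    obtain ⟨a, ha, b, hb, hab⟩ := hW.touches_diff (P := P \ Q)
      (by by_cases hsQ : s ∈ Q; exacts [⟨t, by grind⟩, ⟨s, by grind⟩])
      (by by_cases hxP : x ∈ P; exacts [⟨y, by grind⟩, ⟨x, by grind⟩])
    have := hPQ.mem_or_mem b
    exact hPQ.not_touches
      ⟨a, ha.2, b, by grind, hab.ne, ⟨a, ha.1.1⟩, ⟨b, hb.1.1⟩, hab, rfl, rfl⟩
  obtain ⟨P, hPU, hP, hUP, hPst, hPxy, hUPst, hUPxy⟩ :=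
    hlink.exists_connected_bipartition hU (by grind)
  have hbond : IsBond G U P := ⟨hPU, hP, hUP⟩
  by_cases hsP : s ∈ P
  · exact ⟨P, hbond, hsP, by grind [Set.Nonempty], by grind [Set.Nonempty]⟩
  · exact ⟨U \ P, hbond.diff, ⟨hs, hsP⟩, by grind [Set.Nonempty], by grind [Set.Nonempty]⟩

end SetConnected

theorem exists_isBond_of_partition [Finite V] (h𝓕 : ∀ B ∈ 𝓕, IsBond G U B)
    (hd : 𝓕.PairwiseDisjoint id) (hU : ⋃₀ 𝓕 = U) (hUc : SetConnected G U) (hS : S ∈ 𝓕)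
    (hT : T ∈ 𝓕) (hM : M ∈ 𝓕) (hM' : M' ∈ 𝓕) (hST : S ≠ T) (hMM' : M ≠ M') :
    ∃ P, IsBond G U P ∧ (∀ B ∈ 𝓕, B ⊆ P ∨ B ⊆ U \ P) ∧ S ⊆ P ∧ T ⊆ U \ P ∧
      Opposite M M' P (U \ P) := by
  have hne (B) (hB : B ∈ 𝓕) : B.Nonempty := (h𝓕 B hB).connected.nonempty
  have hdiff {𝓟 : Set (Set V)} (h𝓟 : 𝓟 ⊆ 𝓕) : ⋃₀ (𝓕 \ 𝓟) = U \ ⋃₀ 𝓟 := by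
    refine Set.Subset.antisymm ?_ fun v ⟨hv, hvP⟩ => ?_
    · rintro v ⟨B, hB, hvB⟩
      refine ⟨hU ▸ ⟨B, hB.1, hvB⟩, ?_⟩
      rintro ⟨A, hA, hvA⟩
      exact Set.disjoint_left.1 (hd (h𝓟 hA) hB.1 fun h => hB.2 (h ▸ hA)) hvA hvB
    · obtain ⟨B, hB, hvB⟩ := hU ▸ hv
      exact ⟨B, ⟨hB, fun h => hvP ⟨B, h, hvB⟩⟩, hvB⟩
  obtain ⟨𝓟, ⟨h𝓟, hP, hUP⟩, hSP, hTP, hMP⟩ :=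
    (SetConnected.of_sUnion (hU ▸ hUc) hne hd).exists_isBond (fun B hB =>
      .of_sUnion (by
        rw [hdiff (Set.singleton_subset_iff.2 hB), Set.sUnion_singleton]
        exact (h𝓕 B hB).connected_diff)
        (fun A hA => hne A hA.1) (hd.subset Set.sdiff_subset)) hS hT hM hM' hST hMM'
  have hin {B} (hB : B ∈ 𝓟) : B ⊆ ⋃₀ 𝓟 := Set.subset_sUnion_of_mem hB
  have hout {B} (hB : B ∈ 𝓕) (hBP : B ∉ 𝓟) : B ⊆ U \ ⋃₀ 𝓟 :=
    hdiff h𝓟 ▸ Set.subset_sUnion_of_mem ⟨hB, hBP⟩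
  refine ⟨⋃₀ 𝓟, ⟨hU ▸ Set.sUnion_mono h𝓟, hP.sUnion fun B hB => (h𝓕 B (h𝓟 hB)).connected,
    hdiff h𝓟 ▸ hUP.sUnion fun B hB => (h𝓕 B hB.1).connected⟩,
    fun B hB => (em (B ∈ 𝓟)).imp hin (hout hB), hin hSP, hout hT hTP, ?_⟩
  exact hMP.imp (fun h => ⟨hin h.1, hout hM' h.2⟩) fun h => ⟨hin h.1, hout hM h.2⟩

theorem exists_isBond_of_pairwiseDisjoint [Finite V] (hUc : SetConnected G U)
    (h𝓕 : ∀ B ∈ 𝓕, IsBond G U B) (hd : 𝓕.PairwiseDisjoint id)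
    (hv : ∀ v ∈ U, v ∉ ⋃₀ 𝓕 → SetConnected G (U \ {v})) (hS : S ∈ 𝓕)
    (hT : T ∈ 𝓕) (hM : M ∈ 𝓕) (hM' : M' ∈ 𝓕) (hST : S ≠ T) (hMM' : M ≠ M') :
    ∃ P, IsBond G U P ∧ (∀ B ∈ 𝓕, B ⊆ P ∨ B ⊆ U \ P) ∧ S ⊆ P ∧ T ⊆ U \ P ∧
      Opposite M M' P (U \ P) := by
  have hsing {B : Set V} {v : V} (hB : B ∈ 𝓕) (hv : v ∈ U \ ⋃₀ 𝓕) : Disjoint B {v} :=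
    Set.disjoint_singleton_right.2 fun h => hv.2 ⟨B, hB, h⟩
  let 𝓢 : Set (Set V) := (fun v => {v}) '' (U \ ⋃₀ 𝓕)
  have hbond : ∀ B ∈ 𝓕 ∪ 𝓢, IsBond G U B := by
    rintro B (hB | ⟨v, hvU, rfl⟩)
    · exact h𝓕 B hB
    · exact ⟨Set.singleton_subset_iff.2 hvU.1, .singleton G v, hv v hvU.1 hvU.2⟩
  have hdisj : (𝓕 ∪ 𝓢).PairwiseDisjoint id := by
    rintro A (hA | ⟨v, hvU, rfl⟩) B (hB | ⟨w, hwU, rfl⟩) hne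
    · exact hd hA hB hne
    · exact hsing hA hwU
    · exact (hsing hB hvU).symm
    · exact Set.disjoint_singleton.2 fun h => hne (congrArg _ h)
  have hcover : ⋃₀ (𝓕 ∪ 𝓢) = U := by
    rw [Set.sUnion_union, Set.sUnion_image, Set.biUnion_of_singleton, Set.union_sdiff_cancel]
    exact Set.sUnion_subset fun B hB => (h𝓕 B hB).subset
  obtain ⟨P, hP, hsides, hrest⟩ := exists_isBond_of_partition hbond hdisj hcover hUc (.inl hS)
    (.inl hT) (.inl hM) (.inl hM') hST hMM'
  exact ⟨P, hP, fun B hB => hsides B (.inl hB), hrest⟩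

end Bond

/-! ### Bonds and shielded regions -/

section Shielded

variable {V : Type*} {G : SimpleGraph V}
  {C F K L M M' P R R' S S' T T' U W X Y : Set V} {𝓕 : Set (Set V)}
  {k m n : ℕ}

theorem BasedRegion.enlarge_of_opposite (h : BasedRegion G n S T C) (ho : Opposite S T S' T')
    (hS : SetConnected G S') (hT : SetConnected G T') (hST : Disjoint S' T')
    (hSC : Disjoint S' C) (hTC : Disjoint T' C) : BasedRegion G n S' T' C := by
  rcases ho with ⟨hSS, hTT⟩ | ⟨hTS, hST'⟩
  · exact h.enlarge hS hT hSS hTT hST hSC hTC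
  · exact h.symm.enlarge hS hT hTS hST' hST hSC hTC

/-- `X` either contains `R ∪ K` and avoids `R'`, or avoids `K`. For a shielded region this means
that deleting `K` does not disconnect `X`. -/
def OneSided (R R' K X : Set V) : Prop :=
  (R ∪ K ⊆ X ∧ Disjoint R' X) ∨ Disjoint K X

theorem Opposite.diff (h : Opposite M M' X Y) (hM : Disjoint M C) (hM' : Disjoint M' C) :
    Opposite M M' (X \ C) (Y \ C) :=
  h.imp (fun h => ⟨Set.subset_sdiff.2 ⟨h.1, hM⟩, Set.subset_sdiff.2 ⟨h.2, hM'⟩⟩)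
    fun h => ⟨Set.subset_sdiff.2 ⟨h.1, hM'⟩, Set.subset_sdiff.2 ⟨h.2, hM⟩⟩

theorem Opposite.oneSided (h : Opposite (R ∪ K) R' X Y) (hd : Disjoint X Y) :
    OneSided R R' K X := by
  unfold Opposite at h
  unfold OneSided
  grind

theorem Opposite.oneSided_of_disjoint (h : Opposite (R ∪ K) R' X Y) (hX : Disjoint X W)
    (hY : Disjoint Y W) : OneSided R R' K W := by
  unfold Opposite at h
  unfold OneSided
  grind

namespace ShieldedRegion

theorem isBond_left (h : ShieldedRegion G n U R R' K) : IsBond G U (R ∪ K) where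
  subset := by have := h.subset; grind
  connected := h.connected_left.union_of_touches h.connected h.touches_left
  connected_diff := by
    have := h.subset
    have := h.disjoint
    have := h.disjoint_right
    rw [show U \ (R ∪ K) = R' ∪ U \ (R ∪ R' ∪ K) by grind]
    exact h.connected_right.union_of_touches h.connected_diff h.touches_diff_right

theorem isBond_right (h : ShieldedRegion G n U R R' K) : IsBond G U R' where
  subset := by have := h.subset; grind
  connected := h.connected_right
  connected_diff := by
    have := h.subset
    have := h.disjoint
    have := h.disjoint_right
    rw [show U \ R' = (R ∪ K) ∪ U \ (R ∪ R' ∪ K) by grind]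
    exact h.isBond_left.connected.union_of_touches h.connected_diff
      (h.touches_diff_left.mono Set.subset_union_left subset_rfl)

theorem connected_sdiff (h : ShieldedRegion G n U R R' K) (hX : SetConnected G X) (hXU : X ⊆ U)
    (hside : OneSided R R' K X) : SetConnected G (X \ K) := by
  rcases hside with ⟨hRK, hR'⟩ | hK
  · have := h.disjoint_left
    exact hX.diff h.connected_left (by grind) (by grind) fun ht =>
      h.not_touches_diff (ht.mono subset_rfl (by grind))
  · rwa [hK.symm.sdiff_eq_left]

theorem exists_isBond_subset (h : ShieldedRegion G n U R R' K) (ho : Opposite (R ∪ K) R' X Y) :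
    ∃ F ⊆ X, IsBond G U F ∧ F ⊆ R ∪ R' ∪ K ∧
      ∀ X' Y', F ⊆ X' → Y ⊆ Y' → Opposite (R ∪ K) R' X' Y' := by
  rcases ho with ⟨hX, hY⟩ | ⟨hX, hY⟩
  · exact ⟨R ∪ K, hX, h.isBond_left, by grind, fun _ _ hF hY' => .inl ⟨hF, hY.trans hY'⟩⟩
  · exact ⟨R', hX, h.isBond_right, by grind, fun _ _ hF hY' => .inr ⟨hF, hY.trans hY'⟩⟩

theorem basedRegion_diff (h : ShieldedRegion G n U R R' K) (hX : SetConnected G X)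
    (hY : SetConnected G Y) (hXU : X ⊆ U) (hYU : Y ⊆ U) (hXY : Disjoint X Y)
    (ho : Opposite (R ∪ K) R' X Y) : BasedRegion G n (X \ K) (Y \ K) K := by
  refine h.toBasedRegion.enlarge_of_opposite ?_ (h.connected_sdiff hX hXU (ho.oneSided hXY))
    (h.connected_sdiff hY hYU (ho.symm.oneSided hXY.symm))
    (hXY.mono Set.sdiff_subset Set.sdiff_subset) Set.disjoint_sdiff_left Set.disjoint_sdiff_left
  have := h.disjoint_left
  have := h.disjoint_right
  exact ho.imp (fun h => ⟨by grind, by grind⟩) fun h => ⟨by grind, by grind⟩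

end ShieldedRegion

theorem exists_isBond_of_disjoint [Finite V] (hUc : SetConnected G U) (hS : IsBond G U S)
    (hT : IsBond G U T) (hST : Disjoint S T)
    (hv : ∀ v ∈ U, v ∉ S ∪ T → SetConnected G (U \ {v}))
    (h𝓕 : ∀ B ∈ 𝓕, IsBond G U B ∧ Disjoint S B ∧ Disjoint T B) (hd : 𝓕.PairwiseDisjoint id)
    (hM : M ∈ 𝓕) (hM' : M' ∈ 𝓕) (hMM' : Disjoint M M') :
    ∃ P, IsBond G U P ∧ (∀ B ∈ 𝓕, B ⊆ P ∨ B ⊆ U \ P) ∧ S ⊆ P ∧ T ⊆ U \ P ∧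
      Opposite M M' P (U \ P) := by
  obtain ⟨P, hP, hsides, hrest⟩ := exists_isBond_of_pairwiseDisjoint (𝓕 := insert S (insert T 𝓕))
    hUc (by grind)
    ((hd.insert fun B hB _ => (h𝓕 B hB).2.2).insert fun B hB _ => hB.elim (· ▸ hST)
      fun hB => (h𝓕 B hB).2.1) (fun v hvU hv' => hv v hvU (by simp_all)) (.inl rfl)
    (.inr (.inl rfl)) (.inr (.inr hM)) (.inr (.inr hM')) (hST.ne hS.connected.nonempty.ne_empty)
    (hMM'.ne (h𝓕 M hM).1.connected.nonempty.ne_empty)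
  exact ⟨P, hP, fun B hB => hsides B (.inr (.inr hB)), hrest⟩

theorem BasedRegion.exists_isBond [Finite V] (h : BasedRegion G n S T C)
    (h𝓕 : ∀ B ∈ 𝓕, IsBond G (S ∪ T ∪ C) B ∧ B ⊆ C) (hd : 𝓕.PairwiseDisjoint id)
    (hM : M ∈ 𝓕) (hM' : M' ∈ 𝓕) (hMM' : Disjoint M M') :
    ∃ P, IsBond G (S ∪ T ∪ C) P ∧ (∀ B ∈ 𝓕, B ⊆ P ∨ B ⊆ (S ∪ T ∪ C) \ P) ∧ S ⊆ P ∧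
      T ⊆ (S ∪ T ∪ C) \ P ∧ Opposite M M' P ((S ∪ T ∪ C) \ P) := by
  have hT : SetConnected G ((S ∪ T ∪ C) \ T) := by
    simpa [Set.union_comm T S] using h.symm.connected_diff_left
  exact exists_isBond_of_disjoint h.connected_union ⟨by grind, h.connected_left,
    h.connected_diff_left⟩ ⟨by grind, h.connected_right, hT⟩ h.disjoint
    (fun v hv hvST => h.connected_diff_singleton v (by grind))
    (fun B hB => ⟨(h𝓕 B hB).1, h.disjoint_left.mono_right (h𝓕 B hB).2,
      h.disjoint_right.mono_right (h𝓕 B hB).2⟩) hd hM hM' hMM'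

theorem BasedRegion.exists_region_touching [Finite V] (h : BasedRegion G (k + m + 1) S T C)
    (hG : ¬ IsMinor (Pgraph k) G) :
    ∃ S' Y K, BasedRegion G m S' Y K ∧ S ⊆ S' ∧ S' ⊆ S ∪ C ∧ Y ⊆ C ∧ K ⊆ C ∧ Touches G Y T := by
  obtain ⟨s, hs, c, hc, hsc⟩ := h.touches_left
  obtain ⟨Z, hZ⟩ := h.exists_model
  obtain ⟨L, hLC, hcL, hCL, Z', hL⟩ := hZ.exists_subtree_avoiding c
  obtain ⟨R, R', K, hK, rfl⟩ := h.exists_shieldedRegion hG (hLC.trans Set.sdiff_subset) hL hCL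
    ⟨s, .inl hs, c, ⟨hc, hcL⟩, hsc⟩
  have hLC' : R ∪ R' ∪ K ⊆ C := hLC.trans Set.sdiff_subset
  have := h.disjoint_right
  have hdisj : Disjoint (R ∪ K) R' := by grind [hK.disjoint, hK.disjoint_right]
  obtain ⟨P, hP, -, hSP, hTP, ho⟩ := h.exists_isBond (𝓕 := {R ∪ K, R'})
    (by rintro B (rfl | rfl); exacts [⟨hK.isBond_left, by grind⟩, ⟨hK.isBond_right, by grind⟩])
    (Set.pairwise_pair_of_symm.2 fun _ => hdisj) (.inl rfl) (.inr rfl) hdisj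
  obtain ⟨F, hFP, hF, hFL, hFo⟩ := hK.exists_isBond_subset ho.symm
  obtain ⟨Y, hFY, hYP, hY, hYcl⟩ :=
    hF.connected.exists_component (X := ((S ∪ T ∪ C) \ P) \ T) (by grind)
  have hregion : BasedRegion G m (P \ K) (Y \ K) K :=
    hK.basedRegion_diff hP.connected hY hP.subset (by grind) (by grind)
      (hFo _ _ hFY subset_rfl).symm
  obtain ⟨f, hf⟩ := hF.connected.nonempty
  obtain ⟨t, ht⟩ := h.connected_right.nonempty
  obtain ⟨a, ha, b, hb, hab⟩ := hP.connected_diff.touches_diff (P := Y) ⟨f, by grind⟩ ⟨t, by grind⟩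
  have hbT : b ∈ T := by
    by_contra hbT
    exact hYcl ⟨a, ha.2, b, by grind, hab⟩
  have haK : a ∉ K := fun haK => hK.not_touches_diff ⟨a, haK, b, by grind, hab⟩
  have := h.disjoint_left
  have hPSC : P \ K ⊆ S ∪ C := by have := hP.subset; grind
  exact ⟨P \ K, Y \ K, K, hregion, by grind, hPSC, by grind, by grind, a, ⟨ha.2, haK⟩, b, hbT,
    hab⟩

end Shielded

/-! ### Splitting a based region -/

section Split

variable {V : Type*} {G : SimpleGraph V}
  {C F K K₁ K₂ M M' P Q R R' R₁ R₁' R₂ R₂' S S' T T' U W X Y : Set V} {k m n : ℕ}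

/-- Two disjoint shielded regions of the same set `U`. -/
structure ShieldedPair (G : SimpleGraph V) (m : ℕ) (U R₁ R₁' K₁ R₂ R₂' K₂ : Set V) : Prop where
  first : ShieldedRegion G m U R₁ R₁' K₁
  second : ShieldedRegion G m U R₂ R₂' K₂
  disjoint : Disjoint (R₁ ∪ R₁' ∪ K₁) (R₂ ∪ R₂' ∪ K₂)

/-- Two disjoint based regions inside `U` with the same ends, which contain `S` and `T`. -/
structure ParallelSplit (G : SimpleGraph V) (m : ℕ) (U S T S' T' K₁ K₂ : Set V) : Prop where
  left_subset : S ⊆ S'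
  right_subset : T ⊆ T'
  first : BasedRegion G m S' T' K₁
  second : BasedRegion G m S' T' K₂
  disjoint : Disjoint K₁ K₂
  subset : S' ∪ T' ∪ K₁ ∪ K₂ ⊆ U

/-- Two disjoint based regions inside `U` that share the end `W`, while their other ends contain
`S` and `T`, respectively. -/
structure SeriesSplit (G : SimpleGraph V) (m : ℕ) (U S T S' W T' K₁ K₂ : Set V) : Prop where
  left_subset : S ⊆ S'
  right_subset : T ⊆ T'
  first : BasedRegion G m S' W K₁
  second : BasedRegion G m W T' K₂
  disjoint : Disjoint (S' ∪ K₁) (T' ∪ K₂)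
  subset : S' ∪ W ∪ T' ∪ K₁ ∪ K₂ ⊆ U

/-- Inside `U` there are two disjoint regions of height `m`, placed in parallel or in series between
`S` and `T`. -/
def HasSplit (G : SimpleGraph V) (m : ℕ) (U S T : Set V) : Prop :=
  (∃ S' T' K₁ K₂, ParallelSplit G m U S T S' T' K₁ K₂) ∨
    ∃ S' W T' K₁ K₂, SeriesSplit G m U S T S' W T' K₁ K₂

theorem ParallelSplit.symm (h : ParallelSplit G m U S T S' T' K₁ K₂) :
    ParallelSplit G m U T S T' S' K₁ K₂ :=
  ⟨h.right_subset, h.left_subset, h.first.symm, h.second.symm, h.disjoint,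
    Set.union_comm S' T' ▸ h.subset⟩

theorem SeriesSplit.symm (h : SeriesSplit G m U S T S' W T' K₁ K₂) :
    SeriesSplit G m U T S T' W S' K₂ K₁ :=
  ⟨h.right_subset, h.left_subset, h.second.symm, h.first.symm, h.disjoint.symm, by
    have := h.subset
    grind⟩

theorem HasSplit.symm (h : HasSplit G m U S T) : HasSplit G m U T S :=
  h.imp (fun ⟨S', T', K₁, K₂, h⟩ => ⟨T', S', K₁, K₂, h.symm⟩)
    fun ⟨S', W, T', K₁, K₂, h⟩ => ⟨T', W, S', K₂, K₁, h.symm⟩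

theorem BasedRegion.disjoint_union_left (h : BasedRegion G m R R' K) : Disjoint (R ∪ K) R' :=
  h.disjoint.union_left h.disjoint_right.symm

namespace ShieldedPair

theorem symm (h : ShieldedPair G m U R₁ R₁' K₁ R₂ R₂' K₂) :
    ShieldedPair G m U R₂ R₂' K₂ R₁ R₁' K₁ :=
  ⟨h.second, h.first, h.disjoint.symm⟩

theorem pairwiseDisjoint (h : ShieldedPair G m U R₁ R₁' K₁ R₂ R₂' K₂) :
    ({R₁ ∪ K₁, R₁', R₂ ∪ K₂, R₂'} : Set (Set V)).PairwiseDisjoint id := by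
  have hd : ∀ B ⊆ R₁ ∪ R₁' ∪ K₁, ∀ B' ∈ ({R₂ ∪ K₂, R₂'} : Set (Set V)), Disjoint B B' :=
    fun B hB B' hB' => h.disjoint.mono hB (by rcases hB' with rfl | rfl <;> grind)
  have hpair : ({R₂ ∪ K₂, R₂'} : Set (Set V)).PairwiseDisjoint id :=
    Set.pairwise_pair_of_symm.2 fun _ => h.second.disjoint_union_left
  refine (hpair.insert fun B' hB' _ => hd R₁' (by grind) B' hB').insert fun B' hB' _ => ?_
  rcases hB' with rfl | hB'
  · exact h.first.disjoint_union_left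
  · exact hd (R₁ ∪ K₁) (by grind) B' hB'

theorem basedRegion_first (h : ShieldedPair G m U R₁ R₁' K₁ R₂ R₂' K₂) (hX : SetConnected G X)
    (hY : SetConnected G Y) (hXU : X ⊆ U) (hYU : Y ⊆ U) (hXY : Disjoint X Y)
    (ho : Opposite (R₁ ∪ K₁) R₁' X Y) (hX₂ : OneSided R₂ R₂' K₂ X) (hY₂ : OneSided R₂ R₂' K₂ Y) :
    BasedRegion G m (X \ (K₁ ∪ K₂)) (Y \ (K₁ ∪ K₂)) K₁ := by
  have hM : Disjoint (R₁ ∪ K₁) K₂ := h.disjoint.mono (by grind) (by grind)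
  have hM' : Disjoint R₁' K₂ := h.disjoint.mono (by grind) (by grind)
  rw [Set.union_comm, ← Set.sdiff_sdiff, ← Set.sdiff_sdiff]
  exact h.first.basedRegion_diff (h.second.connected_sdiff hX hXU hX₂)
    (h.second.connected_sdiff hY hYU hY₂) (Set.sdiff_subset.trans hXU) (Set.sdiff_subset.trans hYU)
    (hXY.mono Set.sdiff_subset Set.sdiff_subset) (ho.diff hM hM')

theorem basedRegion_second (h : ShieldedPair G m U R₁ R₁' K₁ R₂ R₂' K₂) (hX : SetConnected G X)
    (hY : SetConnected G Y) (hXU : X ⊆ U) (hYU : Y ⊆ U) (hXY : Disjoint X Y)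
    (hX₁ : OneSided R₁ R₁' K₁ X) (hY₁ : OneSided R₁ R₁' K₁ Y) (ho : Opposite (R₂ ∪ K₂) R₂' X Y) :
    BasedRegion G m (X \ (K₁ ∪ K₂)) (Y \ (K₁ ∪ K₂)) K₂ :=
  Set.union_comm K₂ K₁ ▸ h.symm.basedRegion_first hX hY hXU hYU hXY ho hX₁ hY₁

theorem hasSplit_of_isBond (h : ShieldedPair G m U R₁ R₁' K₁ R₂ R₂' K₂) (hX : IsBond G U X)
    (hSX : S ⊆ X) (hTX : T ⊆ U \ X) (hS : Disjoint S (K₁ ∪ K₂)) (hT : Disjoint T (K₁ ∪ K₂))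
    (h₁ : Opposite (R₁ ∪ K₁) R₁' X (U \ X)) (h₂ : Opposite (R₂ ∪ K₂) R₂' X (U \ X)) :
    HasSplit G m U S T := by
  have hd : Disjoint X (U \ X) := Set.disjoint_sdiff_right
  have hK : Disjoint K₁ K₂ := h.disjoint.mono Set.subset_union_right Set.subset_union_right
  have hsub₁ := h.first.subset
  have hsub₂ := h.second.subset
  refine .inl ⟨X \ (K₁ ∪ K₂), (U \ X) \ (K₁ ∪ K₂), K₁, K₂, by grind, by grind, ?_, ?_, hK, ?_⟩
  · exact h.basedRegion_first hX.connected hX.connected_diff hX.subset Set.sdiff_subset hd h₁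
      (h₂.oneSided hd) (h₂.symm.oneSided hd.symm)
  · exact h.basedRegion_second hX.connected hX.connected_diff hX.subset Set.sdiff_subset hd
      (h₁.oneSided hd) (h₁.symm.oneSided hd.symm) h₂
  · have := hX.subset
    grind

theorem hasSplit_of_tripartition (h : ShieldedPair G m U R₁ R₁' K₁ R₂ R₂' K₂)
    (hX : SetConnected G X) (hW : SetConnected G W) (hY : SetConnected G Y) (hXU : X ⊆ U)
    (hWU : W ⊆ U) (hYU : Y ⊆ U) (hXW : Disjoint X W) (hXY : Disjoint X Y) (hWY : Disjoint W Y)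
    (hSX : S ⊆ X) (hTY : T ⊆ Y) (hS : Disjoint S (K₁ ∪ K₂)) (hT : Disjoint T (K₁ ∪ K₂))
    (h₁ : Opposite (R₁ ∪ K₁) R₁' W Y) (h₂ : Opposite (R₂ ∪ K₂) R₂' X W) :
    HasSplit G m U S T := by
  have hK := h.disjoint
  have hsub₁ := h.first.subset
  have hsub₂ := h.second.subset
  refine .inr ⟨X \ (K₁ ∪ K₂), W \ (K₁ ∪ K₂), Y \ (K₁ ∪ K₂), K₂, K₁, by grind, by grind, ?_, ?_,
    by grind, by grind⟩
  · exact h.basedRegion_second hX hW hXU hWU hXW (h₁.oneSided_of_disjoint hXW.symm hXY.symm)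
      (h₁.oneSided hWY) h₂
  · exact h.basedRegion_first hW hY hWU hYU hWY h₁ (h₂.symm.oneSided hXW.symm)
      (h₂.oneSided_of_disjoint hXY hWY)

end ShieldedPair

theorem IsBond.exists_connected_between [Finite V] (hP : IsBond G U P) (hQ : IsBond G U Q)
    (hQP : Q ⊆ P) (hF : SetConnected G F) (hFP : F ⊆ P) (hFQ : Disjoint F Q) :
    ∃ W, F ⊆ W ∧ W ⊆ P \ Q ∧ SetConnected G W ∧ SetConnected G (U \ (Q ∪ W)) ∧ Touches G Q W ∧
      ¬Touches G W ((P \ Q) \ W) := by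
  have hPU := hP.subset
  obtain ⟨W, hFW, hW, hWc, hWc', hWt⟩ := hQ.connected_diff.exists_connected_bipartition hF
    hP.connected_diff (by grind) (by grind) (Set.disjoint_sdiff_right.mono_left hFP)
  have hWP : W ⊆ P \ Q := by grind
  have hWt' : ¬Touches G W ((P \ Q) \ W) := fun h => hWt (h.mono subset_rfl (by grind))
  refine ⟨W, hFW, hWP, hWc, Set.sdiff_sdiff ▸ hWc', ?_, hWt'⟩
  obtain ⟨q, hq⟩ := hQ.connected.nonempty
  obtain ⟨w, hw⟩ := hWc.nonempty
  obtain ⟨x, hx, y, hy, hxy⟩ := hP.connected.touches_diff (P := W) ⟨w, (hWP hw).1, hw⟩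
    ⟨q, hQP hq, fun h => (hWP h).2 hq⟩
  have hyQ : y ∈ Q := by
    by_contra hyQ
    exact hWt' ⟨x, hx.2, y, ⟨⟨hy.1, hyQ⟩, hy.2⟩, hxy⟩
  exact ⟨y, hyQ, x, hx.2, hxy.symm⟩

theorem IsBond.exists_isBond_or_tripartition [Finite V] (hP : IsBond G U P) (hQ : IsBond G U Q)
    (hQP : Q ⊆ P) (hF : SetConnected G F) (hM : SetConnected G M) (hM' : SetConnected G M')
    (hFP : F ⊆ P) (hMP : M ⊆ P) (hMP' : M' ⊆ P) (hFQ : Disjoint F Q)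
    (ho : Opposite M M' Q (U \ Q)) :
    (∃ X ⊆ P, IsBond G U X ∧ Q ∪ F ⊆ X ∧ Opposite M M' X (U \ X)) ∨
      ∃ W, W ⊆ P \ Q ∧ F ⊆ W ∧ SetConnected G W ∧ SetConnected G (U \ (Q ∪ W)) ∧
        Opposite M M' Q W := by
  have hPU := hP.subset
  obtain ⟨W, hFW, hW, hWc, hWc', hQW, hWt⟩ := hP.exists_connected_between hQ hQP hF hFP hFQ
  have hside : ∀ E, SetConnected G E → E ⊆ P → E ⊆ U \ Q → E ⊆ W ∨ E ⊆ U \ (Q ∪ W) := by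
    intro E hE hEP hEQ
    by_cases h : (E ∩ W).Nonempty
    · exact .inl (hE.subset_of_not_touches h fun ht =>
        hWt (ht.mono Set.inter_subset_right (by grind)))
    · exact .inr fun v hv => ⟨(hEQ hv).1, fun hv' => hv'.elim (hEQ hv).2 fun hvW => h ⟨v, hv, hvW⟩⟩
  have hbond : Opposite M M' (Q ∪ W) (U \ (Q ∪ W)) →
      ∃ X ⊆ P, IsBond G U X ∧ Q ∪ F ⊆ X ∧ Opposite M M' X (U \ X) := fun h =>
    ⟨Q ∪ W, by grind, ⟨by grind, hQ.connected.union_of_touches hWc hQW, hWc'⟩, by grind, h⟩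
  have htri : Opposite M M' Q W → ∃ W, W ⊆ P \ Q ∧ F ⊆ W ∧ SetConnected G W ∧
      SetConnected G (U \ (Q ∪ W)) ∧ Opposite M M' Q W := fun h => ⟨W, hW, hFW, hWc, hWc', h⟩
  rcases ho with ⟨hMQ, hM'Q⟩ | ⟨hM'Q, hMQ⟩
  · exact (hside M' hM' hMP' hM'Q).elim (fun h => .inr (htri (.inl ⟨hMQ, h⟩)))
      fun h => .inl (hbond (.inl ⟨by grind, h⟩))
  · exact (hside M hM hMP hMQ).elim (fun h => .inr (htri (.inr ⟨hM'Q, h⟩)))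
      fun h => .inl (hbond (.inr ⟨by grind, h⟩))

theorem IsBond.refine [Finite V] (hP : IsBond G U P) (hUc : SetConnected G U)
    (hS : IsBond G U S) (hSP : S ⊆ P)
    (hb : ∀ B ∈ ({F, M, M'} : Set (Set V)), IsBond G U B ∧ B ⊆ P)
    (hSF : Disjoint S F) (hSM : Disjoint S (M ∪ M')) (hFM : Disjoint F (M ∪ M'))
    (hMM' : Disjoint M M') (hv : ∀ v ∈ P \ S, SetConnected G (U \ {v})) :
    (∃ X ⊆ P, IsBond G U X ∧ S ∪ F ⊆ X ∧ Opposite M M' X (U \ X)) ∨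
      ∃ X W, X ∪ W ⊆ P ∧ Disjoint X W ∧ S ⊆ X ∧ F ⊆ W ∧ SetConnected G X ∧ SetConnected G W ∧
        SetConnected G (U \ (X ∪ W)) ∧ Opposite M M' X W := by
  have hF := hb F (by simp)
  have hM := hb M (by simp)
  have hM' := hb M' (by simp)
  have hd : ({F, M, M'} : Set (Set V)).PairwiseDisjoint id :=
    (show ({M, M'} : Set (Set V)).PairwiseDisjoint id from
      Set.pairwise_pair_of_symm.2 fun _ => hMM').insert fun B hB _ => hFM.mono_right (by
        rcases hB with rfl | rfl <;> simp)
  have hSB : ∀ B ∈ ({F, M, M'} : Set (Set V)), Disjoint S B := by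
    rintro B (rfl | rfl | rfl)
    exacts [hSF, hSM.mono_right Set.subset_union_left, hSM.mono_right Set.subset_union_right]
  obtain ⟨Q, hQ, hside, hSQ, hTQ, ho⟩ := exists_isBond_of_disjoint (S := S) (T := U \ P)
    (𝓕 := {F, M, M'}) hUc hS hP.diff (Set.disjoint_sdiff_right.mono_left hSP)
    (fun v hvU hvST => hv v (by grind))
    (fun B hB => ⟨(hb B hB).1, hSB B hB, Set.disjoint_sdiff_left.mono_right (hb B hB).2⟩) hd
    (M := M) (M' := M') (by simp) (by simp) hMM'
  have hQP : Q ⊆ P := fun v hv => by_contra fun h => (hTQ ⟨hQ.subset hv, h⟩).2 hv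
  rcases hside F (by simp) with hFQ | hFQ
  · exact .inl ⟨Q, hQP, hQ, Set.union_subset hSQ hFQ, ho⟩
  · rcases hP.exists_isBond_or_tripartition hQ hQP hF.1.connected hM.1.connected hM'.1.connected
      hF.2 hM.2 hM'.2 (Set.disjoint_sdiff_left.mono_left hFQ) ho with
      ⟨X, hXP, hX, hsub, hoX⟩ | ⟨W, hW, hFW, hWc, hWc', hoW⟩
    · exact .inl ⟨X, hXP, hX, (Set.union_subset_union_left F hSQ).trans hsub, hoX⟩
    · exact .inr ⟨Q, W, by grind, by grind, hSQ, hFW, hQ.connected, hWc, hWc', hoW⟩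

theorem ShieldedPair.hasSplit_of_subset [Finite V]
    (h : ShieldedPair G m U R₁ R₁' K₁ R₂ R₂' K₂) (hC : BasedRegion G n S T C)
    (hU : S ∪ T ∪ C = U) (hC₁ : R₁ ∪ R₁' ∪ K₁ ⊆ C) (hC₂ : R₂ ∪ R₂' ∪ K₂ ⊆ C) (hP : IsBond G U P)
    (hSP : S ⊆ P) (hTP : T ⊆ U \ P) (h₁ : Opposite (R₁ ∪ K₁) R₁' P (U \ P))
    (h₂ : R₂ ∪ K₂ ⊆ P) (h₂' : R₂' ⊆ P) :
    HasSplit G m U S T := by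
  subst hU
  have hPU := hP.subset
  have hK : K₁ ∪ K₂ ⊆ C := by grind
  have hSK := hC.disjoint_left.mono_right hK
  have hTK := hC.disjoint_right.mono_right hK
  have hM₂ : R₂ ∪ K₂ ∪ R₂' ⊆ R₂ ∪ R₂' ∪ K₂ := by grind
  obtain ⟨F, hFP, hF, hFL, hoF⟩ := h.first.exists_isBond_subset h₁
  have hb : ∀ B ∈ ({F, R₂ ∪ K₂, R₂'} : Set (Set V)), IsBond G (S ∪ T ∪ C) B ∧ B ⊆ P := by
    rintro B (rfl | rfl | rfl)
    exacts [⟨hF, hFP⟩, ⟨h.second.isBond_left, h₂⟩, ⟨h.second.isBond_right, h₂'⟩]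
  rcases hP.refine hC.connected_union ⟨by grind, hC.connected_left, hC.connected_diff_left⟩ hSP hb
    (hC.disjoint_left.mono_right (hFL.trans hC₁)) (hC.disjoint_left.mono_right (hM₂.trans hC₂))
    (h.disjoint.mono hFL hM₂) h.second.disjoint_union_left
    (fun v hv => hC.connected_diff_singleton v (by grind)) with
    ⟨X, hXP, hX, hSX, ho⟩ | ⟨X, W, hXWP, hXW, hSX, hFW, hX, hW, hY, ho⟩
  · have hPX := Set.sdiff_subset_sdiff_right (s := S ∪ T ∪ C) hXP
    exact h.hasSplit_of_isBond hX (Set.subset_union_left.trans hSX) (hTP.trans hPX) hSK hTK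
      (hoF X _ (Set.subset_union_right.trans hSX) hPX) ho
  · have hPX := Set.sdiff_subset_sdiff_right (s := S ∪ T ∪ C) hXWP
    have hXWU := hXWP.trans hPU
    exact h.hasSplit_of_tripartition hX hW hY (Set.subset_union_left.trans hXWU)
      (Set.subset_union_right.trans hXWU) Set.sdiff_subset hXW
      (Set.disjoint_sdiff_right.mono_left Set.subset_union_left)
      (Set.disjoint_sdiff_right.mono_left Set.subset_union_right) hSX (hTP.trans hPX) hSK hTK
      (hoF W _ hFW hPX) ho

theorem ShieldedPair.hasSplit [Finite V] (h : ShieldedPair G m (S ∪ T ∪ C) R₁ R₁' K₁ R₂ R₂' K₂)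
    (hC : BasedRegion G n S T C) (hC₁ : R₁ ∪ R₁' ∪ K₁ ⊆ C) (hC₂ : R₂ ∪ R₂' ∪ K₂ ⊆ C) :
    HasSplit G m (S ∪ T ∪ C) S T := by
  have hK : K₁ ∪ K₂ ⊆ C := by grind
  have hSK := hC.disjoint_left.mono_right hK
  have hTK := hC.disjoint_right.mono_right hK
  have h𝓕 : ∀ B ∈ ({R₁ ∪ K₁, R₁', R₂ ∪ K₂, R₂'} : Set (Set V)),
      IsBond G (S ∪ T ∪ C) B ∧ B ⊆ C := by
    rintro B (rfl | rfl | rfl | rfl)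
    exacts [⟨h.first.isBond_left, by grind⟩, ⟨h.first.isBond_right, by grind⟩,
      ⟨h.second.isBond_left, by grind⟩, ⟨h.second.isBond_right, by grind⟩]
  obtain ⟨P, hP, hside, hSP, hTP, ho⟩ := hC.exists_isBond h𝓕 h.pairwiseDisjoint (by simp)
    (M' := R₁') (by simp) h.first.disjoint_union_left
  have hPP : (S ∪ T ∪ C) \ ((S ∪ T ∪ C) \ P) = P := Set.sdiff_sdiff_cancel_left hP.subset
  rcases hside (R₂ ∪ K₂) (by simp) with h₂ | h₂ <;> rcases hside R₂' (by simp) with h₂' | h₂'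
  · exact h.hasSplit_of_subset hC rfl hC₁ hC₂ hP hSP hTP ho h₂ h₂'
  · exact h.hasSplit_of_isBond hP hSP hTP hSK hTK ho (.inl ⟨h₂, h₂'⟩)
  · exact h.hasSplit_of_isBond hP hSP hTP hSK hTK ho (.inr ⟨h₂', h₂⟩)
  · exact (h.hasSplit_of_subset hC.symm (by rw [Set.union_comm T]) hC₁ hC₂ hP.diff hTP
      (hPP.symm ▸ hSP) (hPP.symm ▸ ho.symm) h₂ h₂').symm

theorem BasedRegion.hasSplit [Finite V] (h : BasedRegion G (k + m + 2) S T C)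
    (hG : ¬IsMinor (Pgraph k) G) : HasSplit G m (S ∪ T ∪ C) S T := by
  obtain ⟨s, hs, c, hc, hsc⟩ := h.touches_left
  obtain ⟨Z, hZ⟩ := h.exists_model
  obtain ⟨L₁, L₂, hL₁C, hL₂C, hL, hcL₁, hcL₂, hCL₁, hCL₂, ⟨Z₁, h₁⟩, ⟨Z₂, h₂⟩⟩ :=
    hZ.exists_two_subtrees_avoiding c
  obtain ⟨R₁, R₁', K₁, hK₁, rfl⟩ := h.exists_shieldedRegion hG hL₁C h₁ hCL₁
    ⟨s, .inl hs, c, ⟨hc, hcL₁⟩, hsc⟩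
  obtain ⟨R₂, R₂', K₂, hK₂, rfl⟩ := h.exists_shieldedRegion hG hL₂C h₂ hCL₂
    ⟨s, .inl hs, c, ⟨hc, hcL₂⟩, hsc⟩
  exact ShieldedPair.hasSplit ⟨hK₁, hK₂, hL⟩ h hL₁C hL₂C

end Split

/-! ### Rooted models of `𝒫_k` and `𝒬_k` -/

section Rooted

variable {V : Type*} {G : SimpleGraph V}
  {C D K₁ K₂ S S' T T' U U' W X X₁ X₂ Y₁ Y₂ Z : Set V} {a k l m n : ℕ}

/-- `QModel G l S T X`: the sets `S` and `T` and a partition of `X` are the branch sets of a minor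
model of `𝒬_l`, where `S` and `T` are the branch sets of the ends of the base edge. Here `𝒬_0` is a
single edge. -/
inductive QModel (G : SimpleGraph V) : ℕ → Set V → Set V → Set V → Prop
  | base {S T : Set V} : SetConnected G S → SetConnected G T → Disjoint S T → Touches G S T →
      QModel G 0 S T ∅
  | apex {l : ℕ} {S T W X₁ X₂ : Set V} : QModel G l S W X₁ → QModel G l T W X₂ → Disjoint S T →
      Touches G S T → Disjoint S X₂ → Disjoint T X₁ → Disjoint X₁ X₂ →
      QModel G (l + 1) S T (W ∪ X₁ ∪ X₂)

namespace QModel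

theorem symm (h : QModel G l S T X) : QModel G l T S X := by
  cases h with
  | base hS hT hd ht => exact base hT hS hd.symm ht.symm
  | apex h₁ h₂ hd ht hS hT hX =>
    rw [Set.union_right_comm]
    exact apex h₂ h₁ hd.symm ht.symm hT hS hX.symm

theorem connected_left (h : QModel G l S T X) : SetConnected G S := by
  induction h with
  | base hS => exact hS
  | apex _ _ _ _ _ _ _ ih _ => exact ih

theorem connected_right (h : QModel G l S T X) : SetConnected G T :=
  h.symm.connected_left

theorem disjoint (h : QModel G l S T X) : Disjoint S T := by
  cases h <;> assumption

theorem touches (h : QModel G l S T X) : Touches G S T := by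
  cases h <;> assumption

theorem disjoint_left (h : QModel G l S T X) : Disjoint S X := by
  induction h with
  | base => exact Set.disjoint_empty _
  | apex h₁ _ _ _ hS _ _ ih _ => exact (h₁.disjoint.union_right ih).union_right hS

theorem disjoint_right (h : QModel G l S T X) : Disjoint T X :=
  h.symm.disjoint_left

theorem mono_left (h : QModel G l S T X) (hSS : S ⊆ S') (hS : SetConnected G S')
    (hd : Disjoint S' (T ∪ X)) : QModel G l S' T X := by
  induction h generalizing S' with
  | base _ hT _ ht => exact base hS hT (hd.mono_right (by grind)) (ht.mono hSS subset_rfl)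
  | apex _ h₂ _ ht _ hT hX ih =>
    exact apex (ih hSS hS (hd.mono_right (by grind))) h₂ (hd.mono_right (by grind))
      (ht.mono hSS subset_rfl) (hd.mono_right (by grind)) hT hX

theorem mono_right (h : QModel G l S T X) (hTT : T ⊆ T') (hT : SetConnected G T')
    (hd : Disjoint T' (S ∪ X)) : QModel G l S T' X :=
  (h.symm.mono_left hTT hT hd).symm

end QModel

/-- Inside `U` there is a model of the binary tree of height `a` whose root branch set contains `T`,
and disjoint from it a connected set containing `S` that has neighbours in all leaf branch sets. -/
def HasRootedP (G : SimpleGraph V) (a : ℕ) (S T U : Set V) : Prop :=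
  ∃ D Z X, S ⊆ D ∧ T ⊆ Z ∧ D ∪ X ⊆ U ∧ SetConnected G D ∧ Disjoint D X ∧
    BinTreeModel G {v | ∃ d ∈ D, G.Adj v d} a Z X

/-- Inside `U` there is a model of `𝒬_l` in which the branch sets of the ends of the base edge
contain `S` and `T`, respectively. -/
def HasRootedQ (G : SimpleGraph V) (l : ℕ) (S T U : Set V) : Prop :=
  ∃ S' T' X, S ⊆ S' ∧ T ⊆ T' ∧ S' ∪ T' ∪ X ⊆ U ∧ QModel G l S' T' X

namespace HasRootedP

theorem mono (h : HasRootedP G a S T U) (hS : S' ⊆ S) (hT : T' ⊆ T) (hU : U ⊆ U') :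
    HasRootedP G a S' T' U' :=
  let ⟨D, Z, X, hSD, hTZ, hDX, h⟩ := h
  ⟨D, Z, X, hS.trans hSD, hT.trans hTZ, hDX.trans hU, h⟩

theorem of_touches (hS : SetConnected G S) (hT : SetConnected G T) (hd : Disjoint S T)
    (ht : Touches G S T) : HasRootedP G 0 S T (S ∪ T) :=
  let ⟨s, hs, t, ht, hst⟩ := ht
  ⟨S, T, T, subset_rfl, subset_rfl, subset_rfl, hS, hd, .leaf hT ⟨t, ht, s, hs, hst.symm⟩⟩

theorem extend_left (h : HasRootedP G a W T U) (hS : SetConnected G S) (ht : Touches G S W)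
    (hd : Disjoint S U) : HasRootedP G a S T (S ∪ U) := by
  obtain ⟨D, Z, X, hWD, hTZ, hDX, hD, hdDX, hX⟩ := h
  refine ⟨S ∪ D, Z, X, Set.subset_union_left, hTZ, by grind,
    hS.union_of_touches hD (ht.mono subset_rfl hWD), ?_, hX.mono ?_⟩
  · exact (hd.mono_right (by grind)).union_left hdDX
  · exact fun v ⟨d, hd, hvd⟩ => ⟨d, .inr hd, hvd⟩

theorem extend_right (h : HasRootedP G a S W U) (hT : SetConnected G T) (ht : Touches G W T)
    (hd : Disjoint T U) : HasRootedP G a S T (U ∪ T) := by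
  obtain ⟨D, Z, X, hSD, hWZ, hDX, hD, hdDX, hX⟩ := h
  refine ⟨D, Z ∪ T, X ∪ T, hSD, Set.subset_union_right, by grind, hD, ?_,
    hX.union_root hT (ht.mono hWZ subset_rfl) (hd.mono_right (by grind))⟩
  exact hdDX.union_right (hd.mono_right (by grind)).symm

theorem succ (h₁ : HasRootedP G a S Y₁ (S ∪ K₁)) (h₂ : HasRootedP G a S Y₂ (S ∪ K₂))
    (hS : S.Nonempty) (hT : SetConnected G T) (ht₁ : Touches G T Y₁) (ht₂ : Touches G T Y₂)
    (hST : Disjoint S T) (hSK : Disjoint S (K₁ ∪ K₂)) (hTK : Disjoint T (K₁ ∪ K₂))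
    (hK : Disjoint K₁ K₂) : HasRootedP G (a + 1) S T (S ∪ T ∪ K₁ ∪ K₂) := by
  obtain ⟨D₁, Z₁, X₁, hSD₁, hYZ₁, hDX₁, hD₁, hd₁, hX₁⟩ := h₁
  obtain ⟨D₂, Z₂, X₂, hSD₂, hYZ₂, hDX₂, hD₂, hd₂, hX₂⟩ := h₂
  obtain ⟨s, hs⟩ := hS
  obtain ⟨hDK₁, hXSK₁⟩ := Set.union_subset_iff.1 hDX₁
  obtain ⟨hDK₂, hXSK₂⟩ := Set.union_subset_iff.1 hDX₂
  have hXK₁ : X₁ ⊆ K₁ := (hd₁.symm.mono_right hSD₁).subset_right_of_subset_union hXSK₁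
  have hXK₂ : X₂ ⊆ K₂ := (hd₂.symm.mono_right hSD₂).subset_right_of_subset_union hXSK₂
  have hDT : Disjoint (D₁ ∪ D₂) T :=
    (hST.union_left hTK.symm).mono_left (Set.union_subset (by grind) (by grind))
  have hDX₁₂ : Disjoint D₁ X₂ := ((hSK.mono_right (by grind)).union_left hK).mono hDK₁ hXK₂
  have hDX₂₁ : Disjoint D₂ X₁ := ((hSK.mono_right (by grind)).union_left hK.symm).mono hDK₂ hXK₁
  refine ⟨D₁ ∪ D₂, T, T ∪ X₁ ∪ X₂, hSD₁.trans Set.subset_union_left, subset_rfl, ?_,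
    hD₁.union hD₂ ⟨s, hSD₁ hs, hSD₂ hs⟩,
    (hDT.union_right (hd₁.union_left hDX₂₁)).union_right (hDX₁₂.union_left hd₂),
    .node hT (hX₁.mono ?_) (hX₂.mono ?_) (ht₁.mono subset_rfl hYZ₁) (ht₂.mono subset_rfl hYZ₂)
      (hTK.mono_right (by grind)) (hTK.mono_right (by grind)) (hK.mono hXK₁ hXK₂)⟩
  · intro v hv
    grind
  · exact fun v ⟨d, hd, hvd⟩ => ⟨d, .inl hd, hvd⟩
  · exact fun v ⟨d, hd, hvd⟩ => ⟨d, .inr hd, hvd⟩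

end HasRootedP

namespace HasRootedQ

theorem mono (h : HasRootedQ G l S T U) (hS : S' ⊆ S) (hT : T' ⊆ T) (hU : U ⊆ U') :
    HasRootedQ G l S' T' U' :=
  let ⟨A, B, X, hSA, hTB, hsub, h⟩ := h
  ⟨A, B, X, hS.trans hSA, hT.trans hTB, hsub.trans hU, h⟩

theorem of_touches (hS : SetConnected G S) (hT : SetConnected G T) (hd : Disjoint S T)
    (ht : Touches G S T) : HasRootedQ G 0 S T (S ∪ T) :=
  ⟨S, T, ∅, subset_rfl, subset_rfl, by simp, .base hS hT hd ht⟩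

theorem extend_right (h : HasRootedQ G l S W U) (hT : SetConnected G T) (ht : Touches G W T)
    (hd : Disjoint T U) : HasRootedQ G l S T (U ∪ T) := by
  obtain ⟨A, B, X, hSA, hWB, hsub, h⟩ := h
  refine ⟨A, B ∪ T, X, hSA, Set.subset_union_right, by grind, h.mono_right Set.subset_union_left
    (h.connected_right.union_of_touches hT (ht.mono hWB subset_rfl)) ?_⟩
  exact (h.disjoint.symm.union_right h.disjoint_right).union_left (hd.mono_right (by grind))

theorem symm (h : HasRootedQ G l S T U) : HasRootedQ G l T S U :=
  let ⟨A, B, X, hSA, hTB, hsub, h⟩ := h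
  ⟨B, A, X, hTB, hSA, Set.union_comm A B ▸ hsub, h.symm⟩

theorem exists_model (h : HasRootedQ G l S T (S ∪ T ∪ C)) :
    ∃ A B X, S ⊆ A ∧ T ⊆ B ∧ A ⊆ S ∪ C ∧ B ⊆ T ∪ C ∧ X ⊆ C ∧ QModel G l A B X := by
  obtain ⟨A, B, X, hSA, hTB, hsub, h⟩ := h
  have hA : A ⊆ S ∪ T ∪ C := by grind
  have hB : B ⊆ S ∪ T ∪ C := by grind
  have hX : X ⊆ S ∪ T ∪ C := by grind
  have hAT := Set.disjoint_left.1 (h.disjoint.mono_right hTB)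
  have hBS := Set.disjoint_right.1 (h.disjoint.mono_left hSA)
  have hXS := Set.disjoint_right.1 (h.disjoint_left.mono_left hSA)
  have hXT := Set.disjoint_right.1 (h.disjoint_right.mono_left hTB)
  refine ⟨A, B, X, hSA, hTB, fun v hv => ?_, fun v hv => ?_, fun v hv => ?_, h⟩ <;> grind

theorem succ (h₁ : HasRootedQ G l S W (S ∪ W ∪ K₁)) (h₂ : HasRootedQ G l T W (T ∪ W ∪ K₂))
    (hW : W.Nonempty) (ht : Touches G S T) (hd : Disjoint (S ∪ K₁) (T ∪ K₂)) :
    HasRootedQ G (l + 1) S T (S ∪ W ∪ T ∪ K₁ ∪ K₂) := by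
  obtain ⟨A, W₁, X₁, hSA, hWW₁, hA, hW₁, hX₁, h₁⟩ := h₁.exists_model
  obtain ⟨B, W₂, X₂, hTB, hWW₂, hB, hW₂, hX₂, h₂⟩ := h₂.exists_model
  obtain ⟨w, hw⟩ := hW
  have hWc : SetConnected G (W₁ ∪ W₂) :=
    h₁.connected_right.union h₂.connected_right ⟨w, hWW₁ hw, hWW₂ hw⟩
  have hAX : A ∪ X₁ ⊆ S ∪ K₁ := Set.union_subset hA (by grind)
  have hBX : B ∪ X₂ ⊆ T ∪ K₂ := Set.union_subset hB (by grind)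
  have hWA : Disjoint (W₁ ∪ W₂) (A ∪ X₁) :=
    ((h₁.disjoint.symm.union_right h₁.disjoint_right).union_left
      (hd.symm.mono_right hAX)).mono_left (by grind)
  have hWB : Disjoint (W₁ ∪ W₂) (B ∪ X₂) :=
    ((h₂.disjoint.symm.union_right h₂.disjoint_right).union_left
      (hd.mono_right hBX)).mono_left (by grind)
  exact ⟨A, B, W₁ ∪ W₂ ∪ X₁ ∪ X₂, hSA, hTB, by grind,
    .apex (h₁.mono_right Set.subset_union_left hWc hWA)
      (h₂.mono_right Set.subset_union_right hWc hWB) (hd.mono hA hB) (ht.mono hSA hTB)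
      (hd.mono hA (by grind)) (hd.symm.mono hB (by grind)) (hd.mono (by grind) (by grind))⟩

end HasRootedQ

theorem ParallelSplit.hasRooted [Finite V]
    (h : ParallelSplit G (k + m + 1) U S T S' T' K₁ K₂) (hG : ¬IsMinor (Pgraph k) G)
    (hm : ∀ S T C, BasedRegion G m S T C →
      HasRootedP G a S T (S ∪ T ∪ C) ∨ HasRootedQ G l S T (S ∪ T ∪ C)) :
    HasRootedP G (a + 1) S T U ∨ HasRootedQ G l S T U := by
  have hgrow : ∀ K, BasedRegion G (k + m + 1) S' T' K → ∃ Y, Touches G Y T' ∧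
      (HasRootedP G a S' Y (S' ∪ K) ∨ HasRootedQ G l S' Y (S' ∪ K)) := fun K hK => by
    obtain ⟨S₁, Y, L, hL, hSS₁, hS₁, hY, hLK, ht⟩ := hK.exists_region_touching hG
    have hsub : S₁ ∪ Y ∪ L ⊆ S' ∪ K := by grind
    exact ⟨Y, ht, (hm S₁ Y L hL).imp (·.mono hSS₁ subset_rfl hsub) (·.mono hSS₁ subset_rfl hsub)⟩
  have hQ : ∀ K Y, BasedRegion G (k + m + 1) S' T' K → K ⊆ K₁ ∪ K₂ → Touches G Y T' →
      HasRootedQ G l S' Y (S' ∪ K) → HasRootedQ G l S T U := fun K Y hK hKU ht hY =>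
    (hY.extend_right hK.connected_right ht
      (hK.disjoint.symm.union_right hK.disjoint_right)).mono h.left_subset h.right_subset (by
        have := h.subset
        grind)
  obtain ⟨Y₁, ht₁, hP₁ | hQ₁⟩ := hgrow K₁ h.first
  · obtain ⟨Y₂, ht₂, hP₂ | hQ₂⟩ := hgrow K₂ h.second
    · exact .inl ((hP₁.succ hP₂ h.first.connected_left.nonempty h.first.connected_right ht₁.symm
        ht₂.symm h.first.disjoint (h.first.disjoint_left.union_right h.second.disjoint_left)
        (h.first.disjoint_right.union_right h.second.disjoint_right) h.disjoint).mono
        h.left_subset h.right_subset h.subset)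
    · exact .inr (hQ K₂ Y₂ h.second Set.subset_union_right ht₂ hQ₂)
  · exact .inr (hQ K₁ Y₁ h.first Set.subset_union_left ht₁ hQ₁)

theorem ParallelSplit.of_le [Finite V] (h : ParallelSplit G n U S T S' T' K₁ K₂) (hmn : m ≤ n) :
    ParallelSplit G m U S T S' T' K₁ K₂ :=
  { h with first := h.first.of_le hmn, second := h.second.of_le hmn }

theorem SeriesSplit.of_le [Finite V] (h : SeriesSplit G n U S T S' W T' K₁ K₂) (hmn : m ≤ n) :
    SeriesSplit G m U S T S' W T' K₁ K₂ :=
  { h with first := h.first.of_le hmn, second := h.second.of_le hmn }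

theorem SeriesSplit.hasRooted (h : SeriesSplit G m U S T S' W T' K₁ K₂) (hST : Touches G S T)
    (hm : ∀ S T C, BasedRegion G m S T C →
      HasRootedP G a S T (S ∪ T ∪ C) ∨ HasRootedQ G l S T (S ∪ T ∪ C)) :
    HasRootedP G a S T U ∨ HasRootedQ G (l + 1) S T U := by
  have hU := h.subset
  have hd := h.disjoint
  have hS : Disjoint S' (W ∪ T' ∪ K₂) := by
    rw [Set.union_assoc]
    exact h.first.disjoint.union_right (hd.mono_left Set.subset_union_left)
  have hT : Disjoint T' (S' ∪ W ∪ K₁) := by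
    rw [Set.union_right_comm]
    exact (hd.symm.mono_left Set.subset_union_left).union_right h.second.disjoint.symm
  rcases hm S' W K₁ h.first with hP₁ | hQ₁
  · exact .inl ((hP₁.extend_right h.second.connected_right h.second.touches hT).mono
      h.left_subset h.right_subset (by grind))
  rcases hm W T' K₂ h.second with hP₂ | hQ₂
  · exact .inl ((hP₂.extend_left h.first.connected_left h.first.touches hS).mono
      h.left_subset h.right_subset (by grind))
  · exact .inr ((hQ₁.succ (hQ₂.symm.mono subset_rfl subset_rfl (by grind))
      h.second.connected_left.nonempty (hST.mono h.left_subset h.right_subset) hd).mono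
      h.left_subset h.right_subset hU)

theorem exists_height_hasRooted (k a l : ℕ) :
    ∃ N : ℕ, ∀ (V : Type*) [Finite V] (G : SimpleGraph V) (S T C : Set V),
      ¬IsMinor (Pgraph k) G → BasedRegion G N S T C →
        HasRootedP G a S T (S ∪ T ∪ C) ∨ HasRootedQ G l S T (S ∪ T ∪ C) := by
  induction a generalizing l with
  | zero =>
    exact ⟨0, fun V _ G S T C _ h => .inl <| (HasRootedP.of_touches h.connected_left
      h.connected_right h.disjoint h.touches).mono subset_rfl subset_rfl Set.subset_union_left⟩
  | succ a iha =>
    induction l with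
    | zero =>
      exact ⟨0, fun V _ G S T C _ h => .inr <| (HasRootedQ.of_touches h.connected_left
        h.connected_right h.disjoint h.touches).mono subset_rfl subset_rfl Set.subset_union_left⟩
    | succ l ihl =>
      obtain ⟨Na, hNa⟩ := iha (l + 1)
      obtain ⟨Nb, hNb⟩ := ihl
      refine ⟨k + max Nb (k + Na + 1) + 2, fun V _ G S T C hG h => ?_⟩
      rcases h.hasSplit hG with ⟨S', T', K₁, K₂, hs⟩ | ⟨S', W, T', K₁, K₂, hs⟩
      · exact (hs.of_le (le_max_right _ _)).hasRooted hG fun S T C => hNa V G S T C hG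
      · exact (hs.of_le (le_max_left _ _)).hasRooted h.touches fun S T C => hNb V G S T C hG

end Rooted

/-! ### Extracting the minors -/

section Final

variable {V : Type*} {G : SimpleGraph V} {C S T W X Z : Set V} {g : List Bool → Set V}
  {k l n : ℕ} {s t : V}

/-- The branch sets of the ends of the base edge `qbase k σ`, when `S` and `T` are those of the
base edge of `𝒬_k` and `g τ` is that of the apex at node `τ`. -/
def baseSets (S T : Set V) (g : List Bool → Set V) : List Bool → Set V × Set V
  | [] => (S, T)
  | b :: σ => (if b then (baseSets S T g σ).2 else (baseSets S T g σ).1, g σ)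

theorem baseSets_graft (S T W : Set V) (g : Bool → List Bool → Set V) (b : Bool) (σ : List Bool) :
    baseSets S T (graft W g) (σ ++ [b]) = baseSets (if b then T else S) W (g b) σ := by
  induction σ with
  | nil => simp [baseSets]
  | cons c σ ih => simp [baseSets, ih]

/-- The sets `S`, `T` and `g σ` for `σ` of length less than `l` have the incidences that the branch
sets of a minor model of `𝒬_l` need, except for those between `S` and `T`. -/
structure IsQFamily (G : SimpleGraph V) (l : ℕ) (S T : Set V) (g : List Bool → Set V) :
    Prop where
  connected : ∀ σ, σ.length < l → SetConnected G (g σ)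
  pairwiseDisjoint : {σ : List Bool | σ.length < l}.PairwiseDisjoint g
  touches_fst : ∀ σ, σ.length < l → Touches G (g σ) (baseSets S T g σ).1
  touches_snd : ∀ σ, σ.length < l → Touches G (g σ) (baseSets S T g σ).2

theorem IsQFamily.graft {g : Bool → List Bool → Set V} (hW : SetConnected G W)
    (hg : ∀ b, IsQFamily G l (if b then T else S) W (g b)) (hS : Touches G W S)
    (hT : Touches G W T) (hd : ∀ b σ, σ.length < l → Disjoint W (g b σ))
    (hd' : ∀ b c σ τ, b ≠ c → σ.length < l → τ.length < l → Disjoint (g b σ) (g c τ)) :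
    IsQFamily G (l + 1) S T (graft W g) where
  connected σ hσ := by
    rcases σ.eq_nil_or_concat' with rfl | ⟨σ, b, rfl⟩
    · simpa using hW
    · simpa using (hg b).connected σ (by simpa using hσ)
  pairwiseDisjoint σ hσ τ hτ hne := by
    rcases σ.eq_nil_or_concat' with rfl | ⟨σ, b, rfl⟩ <;>
      rcases τ.eq_nil_or_concat' with rfl | ⟨τ, c, rfl⟩
    · exact absurd rfl hne
    · simpa [Function.onFun] using hd c τ (by simpa using hτ)
    · simpa [Function.onFun] using (hd b σ (by simpa using hσ)).symm
    · rcases eq_or_ne b c with rfl | hbc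
      · simpa [Function.onFun] using (hg b).pairwiseDisjoint (by simpa using hσ)
          (by simpa using hτ) (by simpa using hne)
      · simpa [Function.onFun] using hd' b c σ τ hbc (by simpa using hσ) (by simpa using hτ)
  touches_fst σ hσ := by
    rcases σ.eq_nil_or_concat' with rfl | ⟨σ, b, rfl⟩
    · simpa [baseSets] using hS
    · rw [graft_concat, baseSets_graft]
      exact (hg b).touches_fst σ (by simpa using hσ)
  touches_snd σ hσ := by
    rcases σ.eq_nil_or_concat' with rfl | ⟨σ, b, rfl⟩
    · simpa [baseSets] using hT
    · rw [graft_concat, baseSets_graft]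
      exact (hg b).touches_snd σ (by simpa using hσ)

namespace QModel

theorem exists_family (h : QModel G l S T X) :
    ∃ g, IsQFamily G l S T g ∧ ∀ σ, σ.length < l → g σ ⊆ X := by
  induction h with
  | base => exact ⟨fun _ => ∅, ⟨by simp, by simp, by simp, by simp⟩, by simp⟩
  | @apex l S T W X₁ X₂ h₁ h₂ _ _ _ _ hX ih₁ ih₂ =>
    obtain ⟨g₁, hg₁, hgX₁⟩ := ih₁
    obtain ⟨g₂, hg₂, hgX₂⟩ := ih₂
    refine ⟨_, .graft (g := fun b => cond b g₂ g₁) h₁.connected_right ?_ h₁.touches.symm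
      h₂.touches.symm ?_ ?_, fun σ hσ => ?_⟩
    · simp [hg₁, hg₂]
    · rintro (_ | _) σ hσ
      · exact h₁.disjoint_right.mono_right (hgX₁ σ hσ)
      · exact h₂.disjoint_right.mono_right (hgX₂ σ hσ)
    · rintro (_ | _) (_ | _) σ τ hne hσ hτ
      · exact absurd rfl hne
      · exact hX.mono (hgX₁ σ hσ) (hgX₂ τ hτ)
      · exact (hX.mono (hgX₁ τ hτ) (hgX₂ σ hσ)).symm
      · exact absurd rfl hne
    · rcases σ.eq_nil_or_concat' with rfl | ⟨σ, _ | _, rfl⟩ <;> grind [graft_nil, graft_concat]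

/-- The branch sets of the minor model of `𝒬_k` with base sets `S`, `T` and apex sets `g σ`. -/
def branchSet (S T : Set V) (g : List Bool → Set V) : QVert k → Set V :=
  Sum.elim (fun b => if b then T else S) fun σ => g σ.1

theorem branchSet_qbase {σ : List Bool} (hσ : σ.length ≤ k) :
    (branchSet S T g (qbase k σ).1, branchSet S T g (qbase k σ).2) = baseSets S T g σ := by
  induction σ with
  | nil => rfl
  | cons b σ ih =>
    have hσk : σ.length < k := by simpa using hσ
    rw [baseSets, ← ih hσk.le]
    cases b <;> simp [qbase, hσk, branchSet]

theorem isMinor_Qgraph (h : QModel G k S T X) : IsMinor (Qgraph k) G := by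
  obtain ⟨g, hg, hgX⟩ := h.exists_family
  have hF : ∀ w : QVert k, SetConnected G (branchSet S T g w) := by
    rintro ((_ | _) | σ)
    exacts [h.connected_left, h.connected_right, hg.connected _ σ.2]
  refine ⟨branchSet S T g, fun w => (hF w).nonempty, hF, ?_, fun w₁ w₂ hadj => ?_⟩
  · rintro ((_ | _) | σ) ((_ | _) | τ) hne
    · exact absurd rfl hne
    · exact h.disjoint
    · exact h.disjoint_left.mono_right (hgX _ τ.2)
    · exact h.disjoint.symm
    · exact absurd rfl hne
    · exact h.disjoint_right.mono_right (hgX _ τ.2)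
    · exact (h.disjoint_left.mono_right (hgX _ σ.2)).symm
    · exact (h.disjoint_right.mono_right (hgX _ σ.2)).symm
    · exact hg.pairwiseDisjoint σ.2 τ.2 fun hστ => hne (congrArg Sum.inr (Subtype.ext hστ))
  · change Touches G (branchSet S T g w₁) (branchSet S T g w₂)
    rw [Qgraph, SimpleGraph.fromEdgeSet_adj] at hadj
    rcases hadj.1 with he | ⟨σ, hσ, he⟩
    · rcases Sym2.eq_iff.1 he with ⟨rfl, rfl⟩ | ⟨rfl, rfl⟩
      exacts [h.touches, h.touches.symm]
    · obtain ⟨hfst, hsnd⟩ := Prod.ext_iff.1 (branchSet_qbase (S := S) (T := T) (g := g) hσ.le)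
      have key₁ := hfst ▸ hg.touches_fst σ hσ
      have key₂ := hsnd ▸ hg.touches_snd σ hσ
      rcases he with he | he <;> rcases Sym2.eq_iff.1 he with ⟨rfl, rfl⟩ | ⟨rfl, rfl⟩
      exacts [key₁, key₁.symm, key₂, key₂.symm]

end QModel

theorem BasedRegion.of_adj (hG : ∀ v, SetConnected G {v}ᶜ) (hst : G.Adj s t) (hCst : C ⊆ {s, t}ᶜ)
    (hC : ¬Touches G C ({s, t}ᶜ \ C)) (hm : ∃ Z, BinTreeModel G Set.univ n Z C) :
    BasedRegion G n {s} {t} C := by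
  have hCne : C.Nonempty := hm.elim fun _ hZ => hZ.connected.nonempty
  have hs : s ∉ C := by grind
  have ht : t ∉ C := by grind
  have hts := hst.ne
  have touches : ∀ u v, ({u, v} : Set V) = {s, t} → u ≠ v → u ∉ C → Touches G {u} C := by
    intro u v huv hne hu
    obtain ⟨p, hp, q, hq, hpq⟩ := (hG v).touches_diff (P := C) (hCne.mono (by grind)) ⟨u, by grind⟩
    by_cases hqu : q = u
    · exact ⟨u, rfl, p, hp.2, hqu ▸ hpq.symm⟩
    · exact absurd ⟨p, hp.2, q, by grind, hpq⟩ hC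
  refine ⟨.singleton G s, .singleton G t, by simpa using hts, by simpa using hs, by simpa using ht,
    ⟨s, rfl, t, rfl, hst⟩, touches s t rfl hts hs, touches t s (Set.pair_comm t s) hts.symm ht,
    fun c hc => ?_, hm⟩
  have hbase : SetConnected G ({s} ∪ {t}) :=
    (SetConnected.singleton G s).union_of_touches (.singleton G t) ⟨s, rfl, t, rfl, hst⟩
  rw [show ({s} ∪ {t} ∪ C) \ {c} = {c}ᶜ \ ({s} ∪ {t} ∪ C)ᶜ by grind]
  exact (hG c).diff hbase (by grind) (by grind) fun h =>
    hC (h.symm.mono (by grind) (by grind))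

theorem BinTreeModel.exists_basedRegion [Finite V] (h : BinTreeModel G Set.univ (n + 2) Z X)
    (hG : ∀ v, SetConnected G {v}ᶜ) (hst : G.Adj s t) : ∃ C, BasedRegion G n {s} {t} C := by
  obtain ⟨L, -, hs, -, Z₁, hL⟩ := h.exists_subtree_avoiding s
  obtain ⟨L', hL'L, ht, -, Z₂, hL'⟩ := hL.exists_subtree_avoiding t
  obtain ⟨C, hL'C, hCst, hC, hCcl⟩ := hL'.connected.exists_component (X := {s, t}ᶜ) (by grind)
  exact ⟨C, .of_adj hG hst hCst hCcl (hL'.exists_of_subset hL'C hC)⟩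

theorem exists_adj_of_isKConnected_two [Fintype V] (hG : IsKConnected 2 G) :
    ∃ s t, G.Adj s t := by
  have : Nontrivial V := Fintype.one_lt_card_iff_nontrivial.1 (by have := hG.1; omega)
  have hconn : (G.induce Set.univ).Connected := by
    rw [← Set.compl_empty, ← Finset.coe_empty]
    exact hG.2 ∅ (by simp)
  have hpre : G.Preconnected := ((induceUnivIso G).connected_iff.1 hconn).preconnected
  obtain ⟨s⟩ := ‹Nontrivial V›.to_nonempty
  exact ⟨s, hpre.exists_adj_of_nontrivial s⟩

theorem setConnected_compl_singleton [Fintype V] (hG : IsKConnected 2 G) (v : V) :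
    SetConnected G {v}ᶜ := by
  rw [← Finset.coe_singleton]
  exact hG.2 {v} (by simp)

end Final

end PathwidthMinors

/-- Theorem 7.1. For every positive integer `k` there is a positive
integer `p` such that every 2-connected graph of path-width at least `p` has a `𝒫_k` or
`𝒬_k` minor. -/
theorem two_connected_large_pathwidth_has_Pk_or_Qk_minor (k : ℕ) (hk : 0 < k) :
    ∃ p : ℕ, 0 < p ∧ ∀ (V : Type) [Fintype V] (G : SimpleGraph V),
      IsKConnected 2 G → p ≤ pathwidth G →
        IsMinor (Pgraph k) G ∨ IsMinor (Qgraph k) G := by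
  obtain ⟨N, hN⟩ := PathwidthMinors.exists_height_hasRooted k k k
  refine ⟨2 ^ (N + 2 + 1), by positivity, fun V _ G hG hp => ?_⟩
  by_cases hP : IsMinor (Pgraph k) G
  · exact .inl hP
  obtain ⟨s, t, hst⟩ := PathwidthMinors.exists_adj_of_isKConnected_two hG
  obtain ⟨Z, X, hX⟩ := PathwidthMinors.exists_binTreeModel hp
  obtain ⟨C, hC⟩ := hX.exists_basedRegion (PathwidthMinors.setConnected_compl_singleton hG) hst
  rcases hN V G {s} {t} C hP hC with ⟨D, _, Y, -, -, -, hD, hDX, hY⟩ | ⟨_, _, _, -, -, -, hQ⟩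
  · exact .inl (hY.isMinor_Pgraph hD hDX)
  · exact .inr hQ.isMinor_Qgraph
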